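/- arXiv:1908.01265 — 3 statements merged into one kernel-verified Lean document; each statement's English description precedes it below -/
import Mathlib

section
/- Let U ⊆ ℝⁿ be open and Σ : U × U → ℝ a smooth (C^∞) symmetric function (Σ(x,x') = Σ(x',x)) that is nonnegative, vanishes on the diagonal (Σ(x,x) = 0 for all x ∈ U), has vanishing first derivatives on the diagonal (∂Σ/∂x^i (x,x) = 0 for all x ∈ U and all i), and whose Hessian on the diagonal, G_{ij}(x') := ∂²Σ/∂x^i∂x^j (x',x'), is positive definite for every x' ∈ U. Then every point of U has an open neighborhood V ⊆ U and a smooth map η : V × V → ℝⁿ such that η(x',x') = 0 for all x' ∈ V, the differential of x ↦ η(x,x') at x = x' is invertible for every x' ∈ V, and Σ(x,x') = (1/2) Σ_{a,b} G_{ab}(x') η^a(x,x') η^b(x,x') for all (x,x') ∈ V × V. -/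
/-!
The proof is Morse's lemma with the base point `x'` as a parameter.

Near `(x₀, x₀)` the function `Σ` agrees with a globally smooth `T`. Taylor's formula with integral
remainder along the segment from `x'` to `x` gives, since `T` and its first derivative vanish at
`(x', x')`, the identity `T(x,x') = ½ (x - x')ᵀ H(x,x') (x - x')`, where the symmetric matrix
`H(x,x') = ∫₀¹ 2(1-t) D₁²T(x' + t(x - x'), x') dt` (`hadamardHess`) is smooth and equals
`G(x')` at `x = x'` (`taylor_hadamard`, `diagHess_eq_hadamardHess`).

It remains to write `H = Aᵀ G A` with `A` smooth and `A = 1` on the diagonal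
(`exists_congruence`); then `η(x,x') = A(x,x') (x - x')` has derivative `1` at `x = x'`. Let
`A = s(G⁻¹H)`, where `s` is the smooth local square root near `1` given by the inverse function
theorem applied to `a ↦ a²`. Both `A` and its `G`-adjoint `G⁻¹AᵀG` are square roots of `G⁻¹H`
close to `1`, so local uniqueness makes them equal, and `Aᵀ G A = G A² = H`.
-/

open scoped BigOperators
open Set

/-- The partial derivative `∂/∂x^i` in the first argument of a two-point function. -/
noncomputable def d1 (n : ℕ) (i : Fin n) (f : (Fin n → ℝ) → (Fin n → ℝ) → ℝ) :
    (Fin n → ℝ) → (Fin n → ℝ) → ℝ :=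
  fun x x' => fderiv ℝ (fun y => f y x') x (Pi.single i 1)

/-- The Hessian in the first argument of a two-point function, on the diagonal:
`G_{ij}(x') = ∂²Σ/∂x^i∂x^j (x',x')`. -/
noncomputable def diagHess (n : ℕ) (f : (Fin n → ℝ) → (Fin n → ℝ) → ℝ)
    (x' : Fin n → ℝ) : Matrix (Fin n) (Fin n) ℝ :=
  Matrix.of fun i j => d1 n i (d1 n j f) x' x'

open scoped ContDiff Topology Convolution

/-! ### Smooth dependence of integrals on parameters -/

/-- Differentiation under the integral sign, to all orders. The integral is the value at `0` of the
convolution of the indicator of `(0, 1]` with `x ↦ h (p, -x)`, the latter cut off to have compact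
support, so the smoothness of convolutions with parameters applies. -/
theorem contDiff_param_integral {P : Type*} [NormedAddCommGroup P] [NormedSpace ℝ P]
    {h : P × ℝ → ℝ} (hh : ContDiff ℝ ∞ h) :
    ContDiff ℝ ∞ (fun p : P => ∫ t in (0 : ℝ)..1, h (p, t)) := by
  let b : ContDiffBump (0 : ℝ) := ⟨2, 3, by norm_num, by norm_num⟩
  let f : ℝ → ℝ := (Ioc (0 : ℝ) 1).indicator fun _ => 1
  let g : P → ℝ → ℝ := fun p x => b (-x) * h (p, -x)
  have hf : MeasureTheory.LocallyIntegrable f MeasureTheory.volume := by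
    apply MeasureTheory.Integrable.locallyIntegrable
    rw [MeasureTheory.integrable_indicator_iff measurableSet_Ioc]
    simp [MeasureTheory.integrableOn_const_iff]
  have hg : ContDiffOn ℝ ∞ (Function.HasUncurry.uncurry g) (univ ×ˢ univ) := by
    apply ContDiff.contDiffOn
    have h1 : ContDiff ℝ ∞ fun q : P × ℝ => b (-q.2) := b.contDiff.comp contDiff_snd.neg
    have h2 : ContDiff ℝ ∞ fun q : P × ℝ => h (q.1, -q.2) :=
      hh.comp (contDiff_fst.prodMk contDiff_snd.neg)
    exact h1.mul h2
  have key := MeasureTheory.contDiffOn_convolution_right_with_param_comp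
    (μ := MeasureTheory.volume) (n := (⊤ : ℕ∞))
    (ContinuousLinearMap.lsmul ℝ ℝ (E := ℝ)) (s := (univ : Set P)) (v := fun _ => (0 : ℝ))
    contDiffOn_const (f := f) (g := g) (k := Icc (-3) 3) isOpen_univ isCompact_Icc
    (by
      intro p x _ hx
      have : b (-x) = 0 := by
        apply b.zero_of_le_dist
        by_contra hlt
        apply hx
        have : |x| < 3 := by simpa [b] using hlt
        exact ⟨(abs_lt.1 this).1.le, (abs_lt.1 this).2.le⟩
      simp [g, this]) hf hg
  rw [contDiffOn_univ] at key
  convert key using 2 with p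
  rw [MeasureTheory.convolution_def, intervalIntegral.integral_of_le zero_le_one,
    ← MeasureTheory.integral_indicator measurableSet_Ioc]
  congr 1
  ext t
  by_cases ht : t ∈ Ioc (0 : ℝ) 1
  · have : b t = 1 := by
      apply b.one_of_mem_closedBall
      simp only [b, Metric.mem_closedBall, dist_zero_right, Real.norm_eq_abs, abs_le]
      constructor <;> linarith [ht.1, ht.2]
    simp [f, g, ht, this]
  · simp [f, ht]

/-! ### Square roots and congruence of matrices -/

/-- A smooth square root near `1`. The last clause is its local uniqueness: every `a` close to `1`
is the chosen root of `a * a`. -/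
theorem exists_local_sqrt (R : Type*) [NormedRing R] [NormedAlgebra ℝ R] [CompleteSpace R] :
    ∃ s : R → R, s 1 = 1 ∧ (∀ᶠ m in 𝓝 (1 : R), ContDiffAt ℝ ∞ s m) ∧
      (∀ᶠ m in 𝓝 (1 : R), s m * s m = m) ∧ ∀ᶠ a in 𝓝 (1 : R), s (a * a) = a := by
  let e : R ≃L[ℝ] R := ContinuousLinearEquiv.smulLeft (Units.mk0 (2 : ℝ) two_ne_zero)
  -- Working with `ω` rather than `∞` matters: `C^ω` at a point persists near it, `C^∞` need not.
  have hc : ContDiff ℝ ω (fun a : R => a * a) := contDiff_id.mul contDiff_id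
  have hd : HasFDerivAt (fun a : R => a * a) (e : R →L[ℝ] R) 1 := by
    refine ((hasFDerivAt_id (𝕜 := ℝ) (1 : R)).mul' (hasFDerivAt_id (1 : R))).congr_fderiv ?_
    ext x
    simp [e, two_smul, Units.smul_def]
  have h0 : (ω : WithTop ℕ∞) ≠ 0 := by simp
  have hs := hc.contDiffAt.hasStrictFDerivAt' hd h0
  refine ⟨hs.localInverse _ _ _, ?_, ?_, ?_, ?_⟩
  · simpa using hs.localInverse_apply_image
  · have := hc.contDiffAt.to_localInverse hd h0
    simp only [mul_one] at this
    filter_upwards [this.eventually (by simp)] with m hm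
    exact hm.of_le le_top
  · simpa using hs.eventually_right_inverse
  · exact hs.eventually_left_inverse

section
attribute [local instance] Matrix.linftyOpNormedRing Matrix.linftyOpNormedAlgebra

theorem matrix_contDiff {n : ℕ} {P : Type*} [NormedAddCommGroup P] [NormedSpace ℝ P]
    {M : P → Matrix (Fin n) (Fin n) ℝ} {k : WithTop ℕ∞} (h : ∀ i j, ContDiff ℝ k fun p => M p i j) :
    ContDiff ℝ k M := by
  have : M = fun p => ∑ i, ∑ j, M p i j • Matrix.single i j (1 : ℝ) := by
    ext1 p
    conv_lhs => rw [Matrix.matrix_eq_sum_single (M p)]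
    simp
  rw [this]
  fun_prop

/-- A smooth family of symmetric matrices `H (x, x')` that is nondegenerate at `(x₀, x₀)` is, near
that point, congruent to its restriction to the diagonal by a smooth family `A` equal to `1` on the
diagonal. -/
theorem exists_congruence {n : ℕ} {E : Type*} [NormedAddCommGroup E] [NormedSpace ℝ E]
    {H : E × E → Matrix (Fin n) (Fin n) ℝ} (hH : ∀ i j, ContDiff ℝ ∞ fun p => H p i j)
    (hsymm : ∀ p, (H p).transpose = H p) (x₀ : E) (hdet : (H (x₀, x₀)).det ≠ 0) :
    ∃ A : E × E → Matrix (Fin n) (Fin n) ℝ, ∀ᶠ p in 𝓝 (x₀, x₀),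
      (∀ i j, ContDiffAt ℝ ∞ (fun q => A q i j) p) ∧
      (A p).transpose * H (p.2, p.2) * A p = H p ∧ (p.1 = p.2 → A p = 1) := by
  obtain ⟨s, hs1, hsc, hsq, hsu⟩ := exists_local_sqrt (Matrix (Fin n) (Fin n) ℝ)
  have hHc : ContDiff ℝ ∞ H := matrix_contDiff hH
  have hGc : ContDiff ℝ ∞ fun p : E × E => H (p.2, p.2) :=
    hHc.comp (contDiff_snd.prodMk contDiff_snd)
  have hinv : ∀ p : E × E, (H (p.2, p.2)).det ≠ 0 →
      ContDiffAt ℝ ∞ (fun p : E × E => (H (p.2, p.2))⁻¹) p := by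
    intro p hp
    have hu : IsUnit (H (p.2, p.2)) := (Matrix.isUnit_iff_isUnit_det _).2 (isUnit_iff_ne_zero.2 hp)
    obtain ⟨u, hu⟩ := hu
    have h := contDiffAt_ringInverse ℝ (n := ∞) u
    rw [hu] at h
    have := ContDiffAt.comp p h hGc.contDiffAt
    simpa [Function.comp_def, Matrix.nonsing_inv_eq_ringInverse] using this
  let M : E × E → Matrix (Fin n) (Fin n) ℝ := fun p => (H (p.2, p.2))⁻¹ * H p
  have hMc : ∀ p : E × E, (H (p.2, p.2)).det ≠ 0 → ContDiffAt ℝ ∞ M p := fun p hp =>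
    (hinv p hp).mul hHc.contDiffAt
  have hM1 : ∀ x : E, (H (x, x)).det ≠ 0 → M (x, x) = 1 := fun x hx =>
    Matrix.nonsing_inv_mul _ (isUnit_iff_ne_zero.2 hx)
  have hdet' : ∀ᶠ p : E × E in 𝓝 (x₀, x₀), (H (p.2, p.2)).det ≠ 0 := by
    have : Continuous fun p : E × E => (H (p.2, p.2)).det := hGc.continuous.matrix_det
    exact this.continuousAt.eventually_ne hdet
  have hMt : Filter.Tendsto M (𝓝 (x₀, x₀)) (𝓝 1) := by
    have := (hMc (x₀, x₀) hdet).continuousAt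
    rwa [ContinuousAt, hM1 x₀ hdet] at this
  let A : E × E → Matrix (Fin n) (Fin n) ℝ := fun p => s (M p)
  have hsA : ContDiffAt ℝ ∞ s 1 := hsc.self_of_nhds
  have hAt : Filter.Tendsto A (𝓝 (x₀, x₀)) (𝓝 1) := by
    have := hsA.continuousAt.tendsto.comp hMt
    rwa [hs1] at this
  -- `A' p` is the adjoint of `A p` for the bilinear form `H (p.2, p.2)`.
  let A' : E × E → Matrix (Fin n) (Fin n) ℝ := fun p =>
    (H (p.2, p.2))⁻¹ * (A p).transpose * H (p.2, p.2)
  have hA't : Filter.Tendsto A' (𝓝 (x₀, x₀)) (𝓝 1) := by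
    have h1 : Filter.Tendsto (fun p => (A p).transpose) (𝓝 (x₀, x₀)) (𝓝 1) := by
      have h := ((continuous_id (X := Matrix (Fin n) (Fin n) ℝ)).matrix_transpose.tendsto 1).comp hAt
      simpa [Function.comp_def] using h
    have h2 := ((hinv (x₀, x₀) hdet).continuousAt.tendsto.mul h1).mul
      (hGc.continuous.tendsto (x₀, x₀))
    rwa [mul_one, Matrix.nonsing_inv_mul _ (isUnit_iff_ne_zero.2 hdet)] at h2
  refine ⟨A, ?_⟩
  filter_upwards [hdet', hMt.eventually hsc, hMt.eventually hsq, hA't.eventually hsu]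
    with p hp hc hq hu
  have hunit := isUnit_iff_ne_zero.2 hp
  refine ⟨fun i j => ?_, ?_, ?_⟩
  · have h : ContDiffAt ℝ ∞ A p := ContDiffAt.comp p hc (hMc p hp)
    exact ((Matrix.entryLinearMap ℝ ℝ i j).toContinuousLinearMap.contDiff.contDiffAt).comp p h
  · set G := H (p.2, p.2) with hG
    have hGs : G.transpose = G := hsymm _
    have hAA : A p * A p = G⁻¹ * H p := hq
    have h1 : A' p * A' p = M p := by
      calc A' p * A' p = G⁻¹ * (A p).transpose * (G * G⁻¹) * (A p).transpose * G := by
            simp only [A', ← hG, mul_assoc]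
        _ = G⁻¹ * (A p * A p).transpose * G := by
            rw [Matrix.mul_nonsing_inv _ hunit, Matrix.transpose_mul]; simp only [mul_one, mul_assoc]
        _ = G⁻¹ * H p := by
            rw [hAA, Matrix.transpose_mul, Matrix.transpose_nonsing_inv, hGs, hsymm, mul_assoc,
              mul_assoc, Matrix.nonsing_inv_mul _ hunit, mul_one]
    have h2 : A' p = A p := by rw [← hu, h1]
    have h3 : (A p).transpose * G = G * A p := by
      rw [← h2]
      conv_rhs => simp only [A', ← hG]
      rw [h2, ← mul_assoc, ← mul_assoc, Matrix.mul_nonsing_inv _ hunit, one_mul]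
    rw [h3, mul_assoc, hAA, ← mul_assoc, Matrix.mul_nonsing_inv _ hunit, one_mul]
  · intro h
    obtain ⟨x, y⟩ := p
    obtain rfl : x = y := h
    change s (M (x, x)) = 1
    rw [hM1 x hp, hs1]
end

/-! ### Hadamard's form of the second-order Taylor expansion -/

/-- The averaged Hessian `∫₀¹ 2(1-t) ∂ᵢ∂ⱼT(x' + t(x - x'), x') dt` at `p = (x, x')`, where the
derivatives act on the first argument, i.e. in the directions `(eᵢ, 0)` and `(eⱼ, 0)`. The factor
`2(1-t)` has integral `1`. -/
noncomputable def hadamardHess (n : ℕ) (T : (Fin n → ℝ) × (Fin n → ℝ) → ℝ)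
    (p : (Fin n → ℝ) × (Fin n → ℝ)) : Matrix (Fin n) (Fin n) ℝ :=
  Matrix.of fun i j => ∫ t in (0 : ℝ)..1, 2 * (1 - t) *
    fderiv ℝ (fderiv ℝ T) (p.2 + t • (p.1 - p.2), p.2) (Pi.single i 1, 0) (Pi.single j 1, 0)

section
variable {n : ℕ} {T : (Fin n → ℝ) × (Fin n → ℝ) → ℝ}

theorem contDiff_fderiv_infty {E F : Type*} [NormedAddCommGroup E] [NormedSpace ℝ E]
    [NormedAddCommGroup F] [NormedSpace ℝ F] {f : E → F} (hf : ContDiff ℝ ∞ f) :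
    ContDiff ℝ ∞ (fderiv ℝ f) := hf.fderiv_right (by simp)

theorem contDiff_hadamard_integrand (hT : ContDiff ℝ ∞ T) (i j : Fin n) :
    ContDiff ℝ ∞ fun q : ((Fin n → ℝ) × (Fin n → ℝ)) × ℝ => 2 * (1 - q.2) *
      fderiv ℝ (fderiv ℝ T) (q.1.2 + q.2 • (q.1.1 - q.1.2), q.1.2)
        (Pi.single i 1, 0) (Pi.single j 1, 0) := by
  have h2 : ContDiff ℝ ∞ (fderiv ℝ (fderiv ℝ T)) :=
    contDiff_fderiv_infty (contDiff_fderiv_infty hT)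
  have h3 : ContDiff ℝ ∞ fun q : ((Fin n → ℝ) × (Fin n → ℝ)) × ℝ =>
      fderiv ℝ (fderiv ℝ T) (q.1.2 + q.2 • (q.1.1 - q.1.2), q.1.2) := h2.comp (by fun_prop)
  exact (by fun_prop : ContDiff ℝ ∞ fun q : ((Fin n → ℝ) × (Fin n → ℝ)) × ℝ => 2 * (1 - q.2)).mul
    ((h3.clm_apply contDiff_const).clm_apply contDiff_const)

theorem contDiff_hadamardHess (hT : ContDiff ℝ ∞ T) (i j : Fin n) :
    ContDiff ℝ ∞ fun p => hadamardHess n T p i j :=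
  contDiff_param_integral (contDiff_hadamard_integrand hT i j)

theorem hadamardHess_symm (hT : ContDiff ℝ ∞ T) (p : (Fin n → ℝ) × (Fin n → ℝ)) :
    (hadamardHess n T p).transpose = hadamardHess n T p := by
  ext i j
  simp only [hadamardHess, Matrix.transpose_apply, Matrix.of_apply]
  congr 1
  ext t
  congr 1
  exact (hT.contDiffAt.isSymmSndFDerivAt (by
    rw [minSmoothness_of_isRCLikeNormedField]
    exact WithTop.coe_le_coe.2 le_top)).eq _ _

theorem hadamardHess_diag (x : Fin n → ℝ) (i j : Fin n) :
    hadamardHess n T (x, x) i j =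
      fderiv ℝ (fderiv ℝ T) (x, x) (Pi.single i 1, 0) (Pi.single j 1, 0) := by
  have h : ∫ t in (0 : ℝ)..1, 2 * (1 - t) = 1 := by
    rw [intervalIntegral.integral_const_mul, intervalIntegral.integral_sub (by simp) (by simp)]
    simp
    norm_num
  simp only [hadamardHess, Matrix.of_apply, sub_self, smul_zero, add_zero]
  rw [intervalIntegral.integral_mul_const, h, one_mul]

theorem clm_inl_eq_sum {F : Type*} [NormedAddCommGroup F] [NormedSpace ℝ F]
    (L : (Fin n → ℝ) × (Fin n → ℝ) →L[ℝ] F) (w : Fin n → ℝ) :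
    L (w, 0) = ∑ i, w i • L (Pi.single i 1, 0) := by
  let L' := L.comp (ContinuousLinearMap.inl ℝ (Fin n → ℝ) (Fin n → ℝ))
  have hw : w = ∑ i, w i • (Pi.single i 1 : Fin n → ℝ) := by
    ext k
    simp [Finset.sum_apply, Pi.single_apply]
  change L' w = ∑ i, w i • L' (Pi.single i 1)
  conv_lhs => rw [hw]
  simp only [map_sum, map_smul]

/-- Taylor's formula with integral remainder in the first argument, at a zero `(x', x')` of `T`
where the first derivatives in the first argument vanish. -/
theorem taylor_hadamard (hT : ContDiff ℝ ∞ T) (x x' : Fin n → ℝ) (h0 : T (x', x') = 0)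
    (h1 : ∀ i, fderiv ℝ T (x', x') (Pi.single i 1, 0) = 0) :
    T (x, x') = (1 / 2) * ((x - x') ⬝ᵥ (hadamardHess n T (x, x')).mulVec (x - x')) := by
  set w := x - x' with hw
  let γ : ℝ → (Fin n → ℝ) × (Fin n → ℝ) := fun t => (x' + t • w, x')
  have hγ : ∀ t, HasDerivAt γ (w, 0) t := by
    intro t
    have : HasDerivAt (fun t : ℝ => x' + t • w) w t := by
      simpa using ((hasDerivAt_id t).smul_const w).const_add x'
    exact this.prodMk (hasDerivAt_const t x')
  have hT1 := contDiff_fderiv_infty hT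
  have hT2 := contDiff_fderiv_infty hT1
  have hφ : ∀ t, HasDerivAt (fun t => T (γ t)) (fderiv ℝ T (γ t) (w, 0)) t := fun t =>
    ((hT.differentiable (by simp) (γ t)).hasFDerivAt).comp_hasDerivAt t (hγ t)
  have hφ' : ∀ t, HasDerivAt (fun t => fderiv ℝ T (γ t) (w, 0))
      (fderiv ℝ (fderiv ℝ T) (γ t) (w, 0) (w, 0)) t := by
    intro t
    have h := ((hT1.differentiable (by simp) (γ t)).hasFDerivAt).comp_hasDerivAt t (hγ t)
    simpa using h.clm_apply (hasDerivAt_const t ((w, 0) : (Fin n → ℝ) × (Fin n → ℝ)))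
  -- An antiderivative of the remainder integrand, so that no integration by parts is needed.
  have hψ : ∀ t, HasDerivAt (fun t => (1 - t) * fderiv ℝ T (γ t) (w, 0) + T (γ t))
      ((1 - t) * fderiv ℝ (fderiv ℝ T) (γ t) (w, 0) (w, 0)) t := by
    intro t
    have h := (((hasDerivAt_id t).const_sub 1).mul (hφ' t)).add (hφ t)
    exact h.congr_deriv (by simp)
  have hcγ : Continuous γ := by fun_prop
  have hcont : Continuous fun t => (1 - t) * fderiv ℝ (fderiv ℝ T) (γ t) (w, 0) (w, 0) :=
    (by fun_prop : Continuous fun t : ℝ => 1 - t).mul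
      (((hT2.continuous.comp hcγ).clm_apply continuous_const).clm_apply continuous_const)
  have hint := intervalIntegral.integral_eq_sub_of_hasDerivAt (a := 0) (b := 1)
    (fun t _ => hψ t) (hcont.intervalIntegrable _ _)
  have e0 : γ 0 = (x', x') := by simp [γ]
  have e1 : γ 1 = (x, x') := by simp [γ, hw]
  have hz : fderiv ℝ T (x', x') (w, 0) = 0 := by
    rw [clm_inl_eq_sum]; simp [h1]
  rw [e0, e1, h0, hz] at hint
  have hint' : T (x, x') = ∫ t in (0 : ℝ)..1,
      (1 - t) * fderiv ℝ (fderiv ℝ T) (γ t) (w, 0) (w, 0) := by rw [hint]; ring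
  rw [hint']
  have hI : ∀ i j, Continuous fun t : ℝ => w i * w j * (2 * (1 - t) *
      fderiv ℝ (fderiv ℝ T) (γ t) (Pi.single i 1, 0) (Pi.single j 1, 0)) := fun i j =>
    continuous_const.mul ((contDiff_hadamard_integrand hT i j).continuous.comp
      (by fun_prop : Continuous fun t : ℝ => ((x, x'), t)))
  have hR : w ⬝ᵥ (hadamardHess n T (x, x')).mulVec w = ∫ t in (0 : ℝ)..1,
      ∑ i, ∑ j, w i * w j * (2 * (1 - t) *
        fderiv ℝ (fderiv ℝ T) (γ t) (Pi.single i 1, 0) (Pi.single j 1, 0)) := by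
    rw [intervalIntegral.integral_finsetSum
      (fun i _ => (continuous_finsetSum _ fun j _ => hI i j).intervalIntegrable _ _)]
    simp only [dotProduct, Matrix.mulVec, Finset.mul_sum]
    refine Finset.sum_congr rfl fun i _ => ?_
    rw [intervalIntegral.integral_finsetSum (fun j _ => (hI i j).intervalIntegrable _ _)]
    refine Finset.sum_congr rfl fun j _ => ?_
    rw [intervalIntegral.integral_const_mul]
    simp only [hadamardHess, Matrix.of_apply, ← hw, γ]
    ring
  rw [hR, ← intervalIntegral.integral_const_mul]
  congr 1
  ext t
  rw [clm_inl_eq_sum (fderiv ℝ (fderiv ℝ T) (γ t)) w]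
  simp only [sum_apply, smul_apply]
  simp_rw [fun i => clm_inl_eq_sum (fderiv ℝ (fderiv ℝ T) (γ t) (Pi.single i 1, 0)) w]
  simp only [Finset.mul_sum, smul_eq_mul]
  refine Finset.sum_congr rfl fun i _ => Finset.sum_congr rfl fun j _ => ?_
  ring

/-! ### Comparison with the partial derivatives of the two-point function -/

theorem d1_eq_fderiv {S : (Fin n → ℝ) → (Fin n → ℝ) → ℝ} (hT : ContDiff ℝ ∞ T)
    {p : (Fin n → ℝ) × (Fin n → ℝ)} (h : ∀ᶠ q in 𝓝 p, T q = S q.1 q.2) (i : Fin n) :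
    d1 n i S p.1 p.2 = fderiv ℝ T p (Pi.single i 1, 0) := by
  have hc : Filter.Tendsto (fun y => (y, p.2)) (𝓝 p.1) (𝓝 p) :=
    (by fun_prop : Continuous fun y : Fin n → ℝ => (y, p.2)).tendsto p.1
  have he : (fun y => S y p.2) =ᶠ[𝓝 p.1] fun y => T (y, p.2) :=
    (hc.eventually h).mono fun y hy => hy.symm
  have hd : HasFDerivAt (fun y => T (y, p.2))
      ((fderiv ℝ T p).comp (ContinuousLinearMap.inl ℝ (Fin n → ℝ) (Fin n → ℝ))) p.1 :=
    HasFDerivAt.comp p.1 (g := T) (f := fun y => (y, p.2))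
      (hT.differentiable (by simp) p).hasFDerivAt (hasFDerivAt_prodMk_left p.1 p.2)
  rw [d1, he.fderiv_eq, hd.fderiv]
  simp

/-- Follows from `d1_eq_fderiv` applied twice, first to `T` and `S`, then to `∂ⱼT` and `d1 n j S`. -/
theorem diagHess_eq_hadamardHess {S : (Fin n → ℝ) → (Fin n → ℝ) → ℝ} (hT : ContDiff ℝ ∞ T)
    {x : Fin n → ℝ} (h : ∀ᶠ q in 𝓝 (x, x), T q = S q.1 q.2) :
    diagHess n S x = hadamardHess n T (x, x) := by
  ext i j
  have hT1 := contDiff_fderiv_infty hT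
  rw [hadamardHess_diag]
  have h' : ∀ᶠ q in 𝓝 (x, x), fderiv ℝ T q (Pi.single j 1, 0) = d1 n j S q.1 q.2 :=
    h.eventually_nhds.mono fun q hq => (d1_eq_fderiv hT hq j).symm
  have h2 := d1_eq_fderiv (T := fun q => fderiv ℝ T q (Pi.single j 1, 0)) (S := d1 n j S)
    (hT1.clm_apply contDiff_const) h' i
  have h3 : HasFDerivAt (fun q => fderiv ℝ T q (Pi.single j 1, 0))
      ((fderiv ℝ (fderiv ℝ T) (x, x)).flip (Pi.single j 1, 0)) (x, x) := by
    have := (hT1.differentiable (by simp) (x, x)).hasFDerivAt.clm_apply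
      (hasFDerivAt_const (Pi.single j 1, 0) (x, x))
    simpa using this
  rw [h3.fderiv] at h2
  exact h2

theorem exists_smooth_extension {E : Type*} [NormedAddCommGroup E] [NormedSpace ℝ E]
    [FiniteDimensional ℝ E] {f : E → ℝ} {W : Set E} (hW : IsOpen W) (hf : ContDiffOn ℝ ∞ f W)
    {c : E} (hc : c ∈ W) : ∃ T : E → ℝ, ContDiff ℝ ∞ T ∧ ∀ᶠ q in 𝓝 c, T q = f q := by
  obtain ⟨ε, hε, hball⟩ := Metric.isOpen_iff.1 hW c hc
  let b : ContDiffBump c := ⟨ε / 4, ε / 2, by positivity, by linarith⟩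
  refine ⟨fun q => b q * f q, ?_, ?_⟩
  · rw [contDiff_iff_contDiffAt]
    intro q
    by_cases hq : q ∈ W
    · exact b.contDiff.contDiffAt.mul (hf.contDiffAt (hW.mem_nhds hq))
    · have hq' : q ∉ tsupport b := by
        rw [b.tsupport_eq]
        intro h
        exact hq (hball (Metric.closedBall_subset_ball (by simp only [b]; linarith) h))
      refine (contDiffAt_const (c := (0 : ℝ))).congr_of_eventuallyEq ?_
      filter_upwards [notMem_tsupport_iff_eventuallyEq.1 hq'] with y hy
      simp [hy]
  · filter_upwards [b.eventuallyEq_one] with q hq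
    simp [hq]

end

/-- Morse-lemma normal form for a smooth symmetric nonnegative two-point function with a
non-degenerate critical point on the diagonal: locally
`Σ(x,x') = ½ Σ_{a,b} G_{ab}(x') η^a(x,x') η^b(x,x')` for a smooth diffeomorphism-germ
`η(·,x')` vanishing on the diagonal. -/
theorem morse_normal_form (n : ℕ) (hn : 1 ≤ n) (U : Set (Fin n → ℝ)) (hU : IsOpen U)
    (S : (Fin n → ℝ) → (Fin n → ℝ) → ℝ)
    (hsmooth : ContDiffOn ℝ (⊤ : ℕ∞) (fun p : (Fin n → ℝ) × (Fin n → ℝ) => S p.1 p.2) (U ×ˢ U))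
    (hsymm : ∀ x ∈ U, ∀ x' ∈ U, S x x' = S x' x)
    (hnonneg : ∀ x ∈ U, ∀ x' ∈ U, 0 ≤ S x x')
    (hdiag : ∀ x ∈ U, S x x = 0)
    (hcrit : ∀ x ∈ U, ∀ i : Fin n, d1 n i S x x = 0)
    (hhess : ∀ x' ∈ U, (diagHess n S x').PosDef) :
    ∀ x₀ ∈ U, ∃ V : Set (Fin n → ℝ), IsOpen V ∧ x₀ ∈ V ∧ V ⊆ U ∧
      ∃ η : (Fin n → ℝ) → (Fin n → ℝ) → (Fin n → ℝ),
        ContDiffOn ℝ (⊤ : ℕ∞) (fun p : (Fin n → ℝ) × (Fin n → ℝ) => η p.1 p.2) (V ×ˢ V) ∧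
        (∀ x' ∈ V, η x' x' = 0) ∧
        (∀ x' ∈ V, Function.Bijective ⇑(fderiv ℝ (fun x => η x x') x')) ∧
        (∀ x ∈ V, ∀ x' ∈ V,
          S x x' = (1 / 2) * ∑ a, ∑ b, diagHess n S x' a b * η x x' a * η x x' b) := by
  intro x₀ hx₀
  obtain ⟨T, hT, hTS⟩ := exists_smooth_extension (hU.prod hU) hsmooth (c := (x₀, x₀)) ⟨hx₀, hx₀⟩
  have hdet : (hadamardHess n T (x₀, x₀)).det ≠ 0 := by
    rw [← diagHess_eq_hadamardHess hT hTS]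
    exact (hhess x₀ hx₀).det_pos.ne'
  obtain ⟨A, hA⟩ := exists_congruence (contDiff_hadamardHess hT) (hadamardHess_symm hT) x₀ hdet
  obtain ⟨ε, hε, hV⟩ := Metric.eventually_nhds_iff_ball.1
    ((hA.and hTS.eventually_nhds).and ((hU.prod hU).mem_nhds (show (x₀, x₀) ∈ U ×ˢ U from ⟨hx₀, hx₀⟩)))
  simp only [← ball_prod_same] at hV
  have hVU : Metric.ball x₀ ε ⊆ U := fun x hx => (hV (x, x) ⟨hx, hx⟩).2.1
  refine ⟨Metric.ball x₀ ε, Metric.isOpen_ball, Metric.mem_ball_self hε, hVU,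
    fun x x' => (A (x, x')).mulVec (x - x'), ?_, ?_, ?_, ?_⟩
  · intro p hp
    apply ContDiffAt.contDiffWithinAt
    rw [contDiffAt_pi]
    intro i
    simp only [Matrix.mulVec, dotProduct]
    refine ContDiffAt.sum fun j _ => ContDiffAt.mul ((hV p hp).1.1.1 i j) ?_
    simp only [Pi.sub_apply]
    fun_prop
  · intro x' _
    simp
  · intro x' hx'
    have hp := (hV (x', x') ⟨hx', hx'⟩).1.1
    have hA1 : A (x', x') = 1 := hp.2.2 rfl
    have hd : HasFDerivAt (fun x => (A (x, x')).mulVec (x - x'))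
        (ContinuousLinearMap.id ℝ (Fin n → ℝ)) x' := by
      rw [hasFDerivAt_pi']
      intro i
      simp only [Matrix.mulVec, dotProduct, Pi.sub_apply]
      have h1 : ∀ j, DifferentiableAt ℝ (fun x => A (x, x') i j) x' := fun j =>
        DifferentiableAt.comp x' (g := fun q => A q i j) (f := fun x => (x, x'))
          ((hp.1 i j).differentiableAt (by simp)) (by fun_prop)
      have h2 : ∀ j, HasFDerivAt (fun x : Fin n → ℝ => x j - x' j)
          (ContinuousLinearMap.proj (R := ℝ) (φ := fun _ : Fin n => ℝ) j) x' := fun j =>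
        (hasFDerivAt_apply j x').sub_const _
      refine (HasFDerivAt.fun_sum fun j _ => (h1 j).hasFDerivAt.mul (h2 j)).congr_fderiv ?_
      ext v
      simp [hA1, Matrix.one_apply]
    rw [hd.fderiv]
    exact Function.bijective_id
  · intro x hx x' hx'
    obtain ⟨⟨⟨-, hcong, -⟩, hTx⟩, -⟩ := hV (x, x') ⟨hx, hx'⟩
    have hTx' := (hV (x', x') ⟨hx', hx'⟩).1.2
    have ht := taylor_hadamard hT x x'
      (by rw [hTx'.self_of_nhds]; exact hdiag x' (hVU hx'))
      (fun i => by rw [← d1_eq_fderiv hT hTx' i]; exact hcrit x' (hVU hx') i)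
    have e : S x x' = T (x, x') := hTx.self_of_nhds.symm
    rw [e, ht, diagHess_eq_hadamardHess hT hTx', ← hcong]
    congr 1
    set η := (A (x, x')).mulVec (x - x') with hη
    set G := hadamardHess n T (x', x')
    have h1 : (x - x') ⬝ᵥ ((A (x, x')).transpose * G * A (x, x')).mulVec (x - x') =
        η ⬝ᵥ G.mulVec η := by
      rw [← Matrix.mulVec_mulVec, ← Matrix.mulVec_mulVec, ← hη, Matrix.dotProduct_mulVec,
        Matrix.vecMul_transpose]
    rw [h1]
    change _ = ∑ a, ∑ b, G a b * η a * η b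
    clear_value η
    simp only [dotProduct, Matrix.mulVec, Finset.mul_sum]
    refine Finset.sum_congr rfl fun a _ => Finset.sum_congr rfl fun b _ => ?_
    ring
end

section
/- Let U ⊆ ℝⁿ be open, x' ∈ U, and Σ : U → ℝ a smooth nonnegative function with Σ(x') = 0, ∇Σ(x') = 0, Σ(x) > 0 for all x ∈ U with x ≠ x', and positive definite Hessian G = (∂_i∂_jΣ(x')) at x'. Let φ : ℝⁿ → ℝ be smooth with compact support contained in U, and set F(ε) := (4πε)^{−n/2} ∫_U exp(−Σ(x)/(2ε)) φ(x) dx for ε > 0. Write Σ_{i_1…i_k} := ∂_{i_1}⋯∂_{i_k}Σ(x'). Then F(ε) = (det G)^{−1/2} φ(x') + ε F_1 + O(ε²) as ε → 0⁺, where F_1 = (det G)^{−1/2} [ Σ_{i,j} G^{ij} ∂_i∂_jφ(x') − Σ_{i,j,p,q} G^{ij}G^{pq} Σ_{ipq} ∂_jφ(x') + ( −(1/4) Σ G^{ij}G^{kl} Σ_{ijkl} + (1/12) Σ (2 G^{il}G^{jm} + 3 G^{ij}G^{lm}) G^{kn} Σ_{ijk} Σ_{lmn} ) φ(x') ], all sums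 running over repeated indices from 1 to n. -/
/-!
Near its minimum `x'` the phase is quadratic to leading order, so the substitution
`x = x' + √ε y` turns the integral into a Gaussian one. Write `t = √ε`.

Only the values of the phase on `supp φ` and near `x'` matter, so it is replaced by a globally
smooth compactly supported function (`exists_global_extension`), which on that set dominates a
multiple of `‖x - x'‖²` (`exists_coercive`). With `S_k`, `φ_k` the homogeneous Taylor parts (`tay`)
at `x'` and `gw G y = exp (-yᵀ G y / 4)`, Taylor's formula and a third-order expansion of the
exponential give
`exp (-S (x' + t y) / (2 t²)) φ (x' + t y) = gw G y (φ x' + t k₁ + t² k₂ + t³ k₃) + error`,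
where the `k_i` (`coef1`, `coef2`, `coef3`) are polynomials in `y` and the error is at most
`C t⁴ (1 + ‖y‖) ^ N exp (-d ‖y‖²)` (`kernel_bound`). After integration the error is `O(ε²)`, and
`k₁`, `k₃` contribute nothing because they are odd (`integral_expansion`).

The leading term is the Gaussian integral `integral_gw`. The coefficient of `ε = t²` is the
Gaussian expectation of `k₂ = φ₂ - S₃ φ₁ / 2 + (S₃² / 8 - S₄ / 2) φ x'`. The moments of `gw G` up
to order six follow from Gaussian integration by parts (`gw_ibp`), and contracting them with the
symmetric derivative tensors gives the stated `F₁` (`gE_coef2`).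
-/

open scoped BigOperators Topology
open MeasureTheory Asymptotics Filter

/-- The partial derivative `∂_i f`. -/
noncomputable def pd (n : ℕ) (i : Fin n) (f : (Fin n → ℝ) → ℝ) : (Fin n → ℝ) → ℝ :=
  fun y => fderiv ℝ f y (Pi.single i 1)

/-- The Hessian matrix `(∂_i ∂_j f)(x)`. -/
noncomputable def hess (n : ℕ) (f : (Fin n → ℝ) → ℝ) (x : Fin n → ℝ) :
    Matrix (Fin n) (Fin n) ℝ :=
  Matrix.of fun i j => pd n i (pd n j f) x

/-- Third partial derivatives `Σ_{ijk} = ∂_i∂_j∂_k Σ (x)`. -/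
noncomputable def pd3 (n : ℕ) (f : (Fin n → ℝ) → ℝ) (x : Fin n → ℝ)
    (i j k : Fin n) : ℝ :=
  pd n i (pd n j (pd n k f)) x

/-- Fourth partial derivatives `Σ_{ijkl} = ∂_i∂_j∂_k∂_l Σ (x)`. -/
noncomputable def pd4 (n : ℕ) (f : (Fin n → ℝ) → ℝ) (x : Fin n → ℝ)
    (i j k l : Fin n) : ℝ :=
  pd n i (pd n j (pd n k (pd n l f))) x

/-! ### Partial and directional derivatives -/

section Deriv

variable {n : ℕ}

lemma contDiff_pd {f : (Fin n → ℝ) → ℝ} (hf : ContDiff ℝ (⊤ : ℕ∞) f) (i : Fin n) :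
    ContDiff ℝ (⊤ : ℕ∞) (pd n i f) :=
  (hf.fderiv_right (m := (⊤ : ℕ∞)) (by simp)).clm_apply contDiff_const

lemma hasCompactSupport_pd {f : (Fin n → ℝ) → ℝ} (hf : HasCompactSupport f) (i : Fin n) :
    HasCompactSupport (pd n i f) :=
  hf.fderiv_apply ℝ _

lemma pd_comm {f : (Fin n → ℝ) → ℝ} (hf : ContDiff ℝ (⊤ : ℕ∞) f) (i j : Fin n) :
    pd n i (pd n j f) = pd n j (pd n i f) := by
  have hd : Differentiable ℝ (fderiv ℝ f) :=
    (hf.fderiv_right (m := (⊤ : ℕ∞)) (by simp)).differentiable (by simp)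
  have key : ∀ (k l : Fin n) (x : Fin n → ℝ), pd n k (pd n l f) x =
      fderiv ℝ (fderiv ℝ f) x (Pi.single k 1) (Pi.single l 1) := by
    intro k l x
    unfold pd
    rw [fderiv_clm_apply (hd x) (differentiableAt_const _)]
    simp
  funext x
  rw [key, key]
  exact (hf.contDiffAt.isSymmSndFDerivAt
    (by simpa using WithTop.coe_le_coe.2 (le_top : (2 : ℕ∞) ≤ ⊤))) _ _

lemma pd_reverse {f : (Fin n → ℝ) → ℝ} (hf : ContDiff ℝ (⊤ : ℕ∞) f) (i j k : Fin n) :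
    pd n k (pd n j (pd n i f)) = pd n i (pd n j (pd n k f)) := by
  rw [pd_comm (contDiff_pd hf i) k j, pd_comm hf k i, pd_comm (contDiff_pd hf k) j i]

lemma pd_congr {f g : (Fin n → ℝ) → ℝ} {x : Fin n → ℝ} (h : f =ᶠ[𝓝 x] g) (i : Fin n) :
    pd n i f =ᶠ[𝓝 x] pd n i g := by
  filter_upwards [h.fderiv (𝕜 := ℝ)] with y hy
  simp [pd, hy]

/-- The directional derivative `∑ yᵢ ∂ᵢ f`, as an operator on functions. -/
noncomputable def dirD (y : Fin n → ℝ) (f : (Fin n → ℝ) → ℝ) : (Fin n → ℝ) → ℝ :=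
  fun x => ∑ i, y i * pd n i f x

lemma contDiff_dirD {f : (Fin n → ℝ) → ℝ} (hf : ContDiff ℝ (⊤ : ℕ∞) f) (y : Fin n → ℝ) :
    ContDiff ℝ (⊤ : ℕ∞) (dirD y f) :=
  ContDiff.sum fun i _ => contDiff_const.mul (contDiff_pd hf i)

lemma contDiff_dirD_iterate {f : (Fin n → ℝ) → ℝ} (hf : ContDiff ℝ (⊤ : ℕ∞) f) (y : Fin n → ℝ)
    (k : ℕ) : ContDiff ℝ (⊤ : ℕ∞) ((dirD y)^[k] f) := by
  induction k with
  | zero => exact hf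
  | succ k ih => rw [Function.iterate_succ_apply']; exact contDiff_dirD ih y

lemma dirD_eq_fderiv (f : (Fin n → ℝ) → ℝ) (y x : Fin n → ℝ) :
    dirD y f x = fderiv ℝ f x y := by
  conv_rhs => rw [pi_eq_sum_univ' y]
  simp only [map_sum, map_smul, smul_eq_mul, dirD, pd]

lemma dirD_sum {ι : Type*} [Fintype ι] {g : ι → (Fin n → ℝ) → ℝ}
    (hg : ∀ i, ContDiff ℝ (⊤ : ℕ∞) (g i)) (c : ι → ℝ) (y : Fin n → ℝ) :
    dirD y (fun x => ∑ i, c i * g i x) = fun x => ∑ i, c i * dirD y (g i) x := by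
  funext x
  have hd : ∀ i, DifferentiableAt ℝ (g i) x := fun i => (hg i).differentiable (by simp) x
  rw [dirD_eq_fderiv, fderiv_fun_sum fun i _ => (hd i).const_mul (c i)]
  simp only [sum_apply, dirD_eq_fderiv]
  refine Finset.sum_congr rfl fun i _ => ?_
  rw [fderiv_const_mul (hd i)]
  simp

lemma dirD_iterate_sum {ι : Type*} [Fintype ι] (k : ℕ) {g : ι → (Fin n → ℝ) → ℝ}
    (hg : ∀ i, ContDiff ℝ (⊤ : ℕ∞) (g i)) (c : ι → ℝ) (y : Fin n → ℝ) :
    (dirD y)^[k] (fun x => ∑ i, c i * g i x) = fun x => ∑ i, c i * (dirD y)^[k] (g i) x := by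
  induction k with
  | zero => rfl
  | succ k ih =>
    simp only [Function.iterate_succ_apply']
    rw [ih, dirD_sum (fun i => contDiff_dirD_iterate (hg i) y k)]

lemma dirD_iterate_succ (k : ℕ) {f : (Fin n → ℝ) → ℝ} (hf : ContDiff ℝ (⊤ : ℕ∞) f)
    (y x : Fin n → ℝ) :
    (dirD y)^[k + 1] f x = ∑ i, y i * (dirD y)^[k] (pd n i f) x := by
  rw [Function.iterate_succ_apply]
  exact congrFun (dirD_iterate_sum k (fun i => contDiff_pd hf i) y y) x

/-- Since `f` has compact support, its `k`-th directional derivatives are bounded uniformly in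
the base point, with the expected homogeneity in the direction. -/
lemma dirD_iterate_bound (k : ℕ) : ∀ {f : (Fin n → ℝ) → ℝ}, ContDiff ℝ (⊤ : ℕ∞) f →
    HasCompactSupport f → ∃ C, 0 ≤ C ∧ ∀ x y : Fin n → ℝ, |(dirD y)^[k] f x| ≤ C * ‖y‖ ^ k := by
  induction k with
  | zero =>
    intro f hf hc
    obtain ⟨C, hC⟩ := hc.exists_bound_of_continuous hf.continuous
    refine ⟨C, (norm_nonneg _).trans (hC 0), fun x y => by simpa using hC x⟩
  | succ k ih =>
    intro f hf hc
    choose C hC0 hC using fun i => ih (contDiff_pd hf i) (hasCompactSupport_pd hc i)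
    refine ⟨∑ i, C i, Finset.sum_nonneg fun i _ => hC0 i, fun x y => ?_⟩
    rw [dirD_iterate_succ k hf, Finset.sum_mul]
    refine (Finset.abs_sum_le_sum_abs _ _).trans (Finset.sum_le_sum fun i _ => ?_)
    rw [abs_mul, pow_succ]
    have h1 : |y i| ≤ ‖y‖ := norm_le_pi_norm y i
    calc |y i| * |(dirD y)^[k] (pd n i f) x| ≤ ‖y‖ * (C i * ‖y‖ ^ k) := by
          gcongr
          exact hC i x y
      _ = _ := by ring

lemma dirD_iterate_continuous (k : ℕ) (x : Fin n → ℝ) : ∀ {f : (Fin n → ℝ) → ℝ},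
    ContDiff ℝ (⊤ : ℕ∞) f → Continuous fun y : Fin n → ℝ => (dirD y)^[k] f x := by
  induction k with
  | zero => intro f hf; exact continuous_const
  | succ k ih =>
    intro f hf
    simp only [dirD_iterate_succ k hf]
    exact continuous_finsetSum _ fun i _ => (continuous_apply i).mul (ih (contDiff_pd hf i))

lemma dirD_iterate_smul (k : ℕ) (x : Fin n → ℝ) (s : ℝ) (y : Fin n → ℝ) :
    ∀ {f : (Fin n → ℝ) → ℝ}, ContDiff ℝ (⊤ : ℕ∞) f →
      (dirD (s • y))^[k] f x = s ^ k * (dirD y)^[k] f x := by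
  induction k with
  | zero => intro f hf; simp
  | succ k ih =>
    intro f hf
    rw [dirD_iterate_succ k hf, dirD_iterate_succ k hf, Finset.mul_sum]
    refine Finset.sum_congr rfl fun i _ => ?_
    rw [ih (contDiff_pd hf i)]
    simp only [Pi.smul_apply, smul_eq_mul]
    ring

lemma iteratedDeriv_line {f : (Fin n → ℝ) → ℝ} (hf : ContDiff ℝ (⊤ : ℕ∞) f)
    (x y : Fin n → ℝ) (k : ℕ) :
    iteratedDeriv k (fun t : ℝ => f (x + t • y)) = fun t => (dirD y)^[k] f (x + t • y) := by
  induction k with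
  | zero => simp
  | succ k ih =>
    rw [iteratedDeriv_succ, ih]
    funext t
    have h1 : HasDerivAt (fun t : ℝ => x + t • y) y t := by
      simpa using ((hasDerivAt_id t).smul_const y).const_add x
    have h2 := ((contDiff_dirD_iterate hf y k).differentiable (by simp) (x + t • y)).hasFDerivAt
    rw [Function.iterate_succ_apply', dirD_eq_fderiv]
    exact (h2.comp_hasDerivAt t h1).deriv

/-- The degree-`k` homogeneous part of the Taylor expansion of `f` at `x`. -/
noncomputable def tay (f : (Fin n → ℝ) → ℝ) (x : Fin n → ℝ) (k : ℕ) (y : Fin n → ℝ) : ℝ :=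
  (dirD y)^[k] f x / (k.factorial : ℝ)

lemma tay_zero (f : (Fin n → ℝ) → ℝ) (x y : Fin n → ℝ) : tay f x 0 y = f x := by simp [tay]

lemma tay_smul {f : (Fin n → ℝ) → ℝ} (hf : ContDiff ℝ (⊤ : ℕ∞) f) (x : Fin n → ℝ) (k : ℕ)
    (s : ℝ) (y : Fin n → ℝ) : tay f x k (s • y) = s ^ k * tay f x k y := by
  rw [tay, dirD_iterate_smul k x s y hf, tay, mul_div_assoc]

lemma tay_neg {f : (Fin n → ℝ) → ℝ} (hf : ContDiff ℝ (⊤ : ℕ∞) f) (x : Fin n → ℝ) (k : ℕ)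
    (y : Fin n → ℝ) : tay f x k (-y) = (-1) ^ k * tay f x k y := by
  rw [← tay_smul hf, neg_one_smul]

lemma tay_continuous {f : (Fin n → ℝ) → ℝ} (hf : ContDiff ℝ (⊤ : ℕ∞) f) (x : Fin n → ℝ) (k : ℕ) :
    Continuous (tay f x k) :=
  (dirD_iterate_continuous k x hf).div_const _

lemma tay_bound {f : (Fin n → ℝ) → ℝ} (hf : ContDiff ℝ (⊤ : ℕ∞) f) (hc : HasCompactSupport f)
    (x : Fin n → ℝ) (k : ℕ) : ∃ C, 0 ≤ C ∧ ∀ y, |tay f x k y| ≤ C * ‖y‖ ^ k := by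
  obtain ⟨C, hC0, hC⟩ := dirD_iterate_bound k hf hc
  refine ⟨C, hC0, fun y => ?_⟩
  rw [tay, abs_div, Nat.abs_cast]
  refine (div_le_self (abs_nonneg _) ?_).trans (hC x y)
  exact_mod_cast Nat.factorial_pos k

/-- Taylor's theorem with a remainder that is uniform over all of `ℝⁿ`. -/
lemma tay_remainder {f : (Fin n → ℝ) → ℝ} (hf : ContDiff ℝ (⊤ : ℕ∞) f)
    (hc : HasCompactSupport f) (x : Fin n → ℝ) (k : ℕ) :
    ∃ C, 0 ≤ C ∧ ∀ y, |f (x + y) - ∑ i ∈ Finset.range (k + 1), tay f x i y| ≤ C * ‖y‖ ^ (k + 1) := by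
  obtain ⟨C, hC0, hC⟩ := dirD_iterate_bound (k + 1) hf hc
  refine ⟨C, hC0, fun y => ?_⟩
  have hg : ContDiff ℝ (⊤ : ℕ∞) (fun t : ℝ => f (x + t • y)) :=
    hf.comp (contDiff_const.add (contDiff_id.smul contDiff_const))
  obtain ⟨s, -, hs⟩ := taylor_mean_remainder_lagrange_iteratedDeriv (n := k) (zero_ne_one' ℝ)
    (hg.of_le (by exact_mod_cast le_top)).contDiffOn
  have hT : taylorWithinEval (fun t : ℝ => f (x + t • y)) k (Set.uIcc 0 1) 0 1
      = ∑ i ∈ Finset.range (k + 1), tay f x i y := by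
    rw [taylor_within_apply]
    refine Finset.sum_congr rfl fun i _ => ?_
    rw [iteratedDerivWithin_eq_iteratedDeriv (uniqueDiffOn_uIcc (zero_ne_one' ℝ))
      (hg.of_le (by exact_mod_cast le_top)).contDiffAt Set.left_mem_uIcc,
      iteratedDeriv_line hf]
    simp [tay, div_eq_inv_mul]
  rw [hT, iteratedDeriv_line hf] at hs
  simp only [one_smul, sub_zero, one_pow, mul_one] at hs
  rw [hs, abs_div, Nat.abs_cast]
  refine (div_le_self (abs_nonneg _) ?_).trans (hC _ y)
  exact_mod_cast Nat.factorial_pos (k + 1)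

lemma tay_one {f : (Fin n → ℝ) → ℝ} (x y : Fin n → ℝ) :
    tay f x 1 y = ∑ i, y i * pd n i f x := by
  simp [tay, dirD]

lemma tay_two {f : (Fin n → ℝ) → ℝ} (hf : ContDiff ℝ (⊤ : ℕ∞) f) (x y : Fin n → ℝ) :
    tay f x 2 y = 1 / 2 * ∑ i, ∑ j, pd n i (pd n j f) x * (y i * y j) := by
  have h1 := fun i => contDiff_pd hf i
  rw [tay, dirD_iterate_succ 1 hf, div_eq_inv_mul]
  simp only [dirD_iterate_succ 0 (h1 _), Function.iterate_zero, id, Finset.mul_sum]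
  norm_num
  refine Finset.sum_congr rfl fun i _ => Finset.sum_congr rfl fun j _ => ?_
  rw [pd_comm hf i j]; ring

lemma tay_three {f : (Fin n → ℝ) → ℝ} (hf : ContDiff ℝ (⊤ : ℕ∞) f) (x y : Fin n → ℝ) :
    tay f x 3 y = 1 / 6 * ∑ i, ∑ j, ∑ k, pd3 n f x i j k * (y i * y j * y k) := by
  have h1 := fun i => contDiff_pd hf i
  have h2 := fun i j => contDiff_pd (h1 i) j
  rw [tay, dirD_iterate_succ 2 hf, div_eq_inv_mul]
  simp only [dirD_iterate_succ 1 (h1 _), dirD_iterate_succ 0 (h2 _ _), Function.iterate_zero, id,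
    Finset.mul_sum, pd3]
  norm_num [Nat.factorial]
  refine Finset.sum_congr rfl fun i _ => Finset.sum_congr rfl fun j _ =>
    Finset.sum_congr rfl fun k _ => ?_
  rw [pd_reverse hf]
  ring

lemma tay_four {f : (Fin n → ℝ) → ℝ} (hf : ContDiff ℝ (⊤ : ℕ∞) f) (x y : Fin n → ℝ) :
    tay f x 4 y = 1 / 24 * ∑ i, ∑ j, ∑ k, ∑ l, pd4 n f x i j k l * (y i * y j * y k * y l) := by
  have h1 := fun i => contDiff_pd hf i
  have h2 := fun i j => contDiff_pd (h1 i) j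
  have h3 := fun i j k => contDiff_pd (h2 i j) k
  rw [tay, dirD_iterate_succ 3 hf, div_eq_inv_mul]
  simp only [dirD_iterate_succ 2 (h1 _), dirD_iterate_succ 1 (h2 _ _),
    dirD_iterate_succ 0 (h3 _ _ _), Function.iterate_zero, id, Finset.mul_sum, pd4]
  norm_num [Nat.factorial]
  refine Finset.sum_congr rfl fun i _ => Finset.sum_congr rfl fun j _ =>
    Finset.sum_congr rfl fun k _ => Finset.sum_congr rfl fun l _ => ?_
  rw [pd_reverse (h1 i), pd_comm hf l i, pd_comm (h1 l) k i, pd_comm (h2 l k) j i]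
  ring

lemma pd3_symm {f : (Fin n → ℝ) → ℝ} (hf : ContDiff ℝ (⊤ : ℕ∞) f) (x : Fin n → ℝ)
    (i j k : Fin n) :
    pd3 n f x i j k = pd3 n f x j i k ∧ pd3 n f x i j k = pd3 n f x i k j :=
  ⟨congrFun (pd_comm (contDiff_pd hf k) i j) x, by rw [pd3, pd_comm hf j k, pd3]⟩

end Deriv
/-! ### Gaussian integrals -/

section Gauss

variable {n : ℕ}

/-- The Gaussian weight `exp (-yᵀ G y / 4)`; its covariance matrix is `2 G⁻¹`. -/
noncomputable def gw (G : Matrix (Fin n) (Fin n) ℝ) (y : Fin n → ℝ) : ℝ :=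
  Real.exp (-(1 / 4 * ∑ i, ∑ j, G i j * (y i * y j)))

/-- Continuous functions of at most polynomial growth. -/
def PolyGrowth (f : (Fin n → ℝ) → ℝ) : Prop :=
  Continuous f ∧ ∃ (C : ℝ) (N : ℕ), 0 ≤ C ∧ ∀ y, |f y| ≤ C * (1 + ‖y‖) ^ N

lemma PolyGrowth.const (c : ℝ) : PolyGrowth (fun _ : Fin n → ℝ => c) :=
  ⟨continuous_const, |c|, 0, abs_nonneg _, fun y => by simp⟩

lemma PolyGrowth.coord (i : Fin n) : PolyGrowth (fun y : Fin n → ℝ => y i) :=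
  ⟨continuous_apply i, 1, 1, zero_le_one, fun y => by
    have h1 : |y i| ≤ ‖y‖ := norm_le_pi_norm y i
    linarith⟩

lemma PolyGrowth.mul {f g : (Fin n → ℝ) → ℝ} (hf : PolyGrowth f) (hg : PolyGrowth g) :
    PolyGrowth (fun y => f y * g y) := by
  obtain ⟨hf, C, N, hC, hfC⟩ := hf
  obtain ⟨hg, D, M, hD, hgD⟩ := hg
  refine ⟨hf.mul hg, C * D, N + M, mul_nonneg hC hD, fun y => ?_⟩
  rw [abs_mul, pow_add]
  calc |f y| * |g y| ≤ (C * (1 + ‖y‖) ^ N) * (D * (1 + ‖y‖) ^ M) := by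
        gcongr
        exacts [hfC y, hgD y]
    _ = _ := by ring

lemma PolyGrowth.add {f g : (Fin n → ℝ) → ℝ} (hf : PolyGrowth f) (hg : PolyGrowth g) :
    PolyGrowth (fun y => f y + g y) := by
  obtain ⟨hf, C, N, hC, hfC⟩ := hf
  obtain ⟨hg, D, M, hD, hgD⟩ := hg
  refine ⟨hf.add hg, C + D, N + M, add_nonneg hC hD, fun y => (abs_add_le _ _).trans ?_⟩
  have h1 : (1 : ℝ) ≤ 1 + ‖y‖ := by linarith [norm_nonneg y]
  have h2 : (1 + ‖y‖) ^ N ≤ (1 + ‖y‖) ^ (N + M) := pow_le_pow_right₀ h1 (by omega)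
  have h3 : (1 + ‖y‖) ^ M ≤ (1 + ‖y‖) ^ (N + M) := pow_le_pow_right₀ h1 (by omega)
  nlinarith [hfC y, hgD y, mul_le_mul_of_nonneg_left h2 hC, mul_le_mul_of_nonneg_left h3 hD]

lemma PolyGrowth.sum {ι : Type*} (s : Finset ι) {f : ι → (Fin n → ℝ) → ℝ}
    (hf : ∀ i, PolyGrowth (f i)) : PolyGrowth (fun y => ∑ i ∈ s, f i y) := by
  classical
  induction s using Finset.induction_on with
  | empty => simpa using PolyGrowth.const 0
  | insert a s ha ih => simpa only [Finset.sum_insert ha] using (hf a).add ih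

lemma integrable_pow_mul_exp {c : ℝ} (hc : 0 < c) (N : ℕ) :
    Integrable (fun y : Fin n → ℝ => (1 + ‖y‖) ^ N * Real.exp (-(c * ‖y‖ ^ 2))) := by
  -- `(1 + s) ^ (2 M) ≤ 2 ^ M (1 + s²) ^ M ≤ B exp (c s²)` leaves an integrable power of `1 + s`.
  set M := N + n + 1 with hM
  obtain ⟨B, hB0, hB⟩ : ∃ B : ℝ, 0 ≤ B ∧ ∀ s : ℝ, 0 ≤ s →
      (1 + s) ^ (2 * M) ≤ B * Real.exp (c * s ^ 2) := by
    refine ⟨(2 / c) ^ M * M.factorial * Real.exp c, by positivity, fun s hs => ?_⟩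
    have h1 : (1 + s) ^ 2 ≤ (2 / c) * (c * (1 + s ^ 2)) := by
      rw [← mul_assoc, div_mul_cancel₀ _ hc.ne']
      nlinarith [sq_nonneg (1 - s)]
    have h2 := Real.pow_div_factorial_le_exp (x := c * (1 + s ^ 2)) (by positivity) M
    rw [div_le_iff₀ (by positivity)] at h2
    calc (1 + s) ^ (2 * M) = ((1 + s) ^ 2) ^ M := by rw [pow_mul]
      _ ≤ ((2 / c) * (c * (1 + s ^ 2))) ^ M := by gcongr
      _ = (2 / c) ^ M * (c * (1 + s ^ 2)) ^ M := by rw [mul_pow]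
      _ ≤ (2 / c) ^ M * (Real.exp (c * (1 + s ^ 2)) * M.factorial) := by gcongr
      _ = _ := by rw [show c * (1 + s ^ 2) = c + c * s ^ 2 by ring, Real.exp_add]; ring
  have hInt : Integrable (fun y : Fin n → ℝ => B * (1 + ‖y‖) ^ (-((n : ℝ) + 1))) :=
    (integrable_one_add_norm (by simp)).const_mul B
  refine hInt.mono' (by fun_prop) (Eventually.of_forall fun y => ?_)
  have hp : 0 < 1 + ‖y‖ := by positivity
  rw [Real.norm_of_nonneg (by positivity), Real.exp_neg, Real.rpow_neg hp.le,
    ← div_eq_mul_inv, ← div_eq_mul_inv, div_le_div_iff₀ (Real.exp_pos _) (by positivity)]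
  have h3 : (1 + ‖y‖) ^ ((n : ℝ) + 1) = (1 + ‖y‖) ^ (n + 1) := by
    exact_mod_cast Real.rpow_natCast (1 + ‖y‖) (n + 1)
  rw [h3, ← pow_add]
  exact (pow_le_pow_right₀ (by linarith [norm_nonneg y]) (by omega)).trans (hB _ (norm_nonneg y))

lemma quad_eq_sum_sq {G A : Matrix (Fin n) (Fin n) ℝ} (hA : G = A.transpose * A)
    (y : Fin n → ℝ) : ∑ i, ∑ j, G i j * (y i * y j) = ∑ k, (A.mulVec y k) ^ 2 := by
  have : ∑ i, ∑ j, G i j * (y i * y j) = y ⬝ᵥ G.mulVec y := by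
    simp only [dotProduct, Matrix.mulVec, Finset.mul_sum]
    exact Finset.sum_congr rfl fun i _ => Finset.sum_congr rfl fun j _ => by ring
  rw [this, hA, ← Matrix.mulVec_mulVec, Matrix.dotProduct_mulVec, Matrix.vecMul_transpose]
  simp only [dotProduct, sq]

open scoped MatrixOrder Matrix.Norms.L2Operator in
lemma exists_factor {G : Matrix (Fin n) (Fin n) ℝ} (hG : G.PosDef) :
    ∃ A : Matrix (Fin n) (Fin n) ℝ, G = A.transpose * A ∧ A.det ≠ 0 := by
  obtain ⟨A, hA⟩ := CStarAlgebra.nonneg_iff_eq_star_mul_self.mp hG.posSemidef.nonneg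
  rw [Matrix.star_eq_conjTranspose, Matrix.conjTranspose_eq_transpose_of_trivial] at hA
  refine ⟨A, hA, fun h => hG.det_pos.ne' ?_⟩
  rw [hA, Matrix.det_mul, h, mul_zero]

lemma quad_coercive {G : Matrix (Fin n) (Fin n) ℝ} (hG : G.PosDef) :
    ∃ c : ℝ, 0 < c ∧ ∀ y : Fin n → ℝ, c * ‖y‖ ^ 2 ≤ 1 / 4 * ∑ i, ∑ j, G i j * (y i * y j) := by
  obtain ⟨A, hA, hdet⟩ := exists_factor hG
  obtain ⟨K, hK0, hK⟩ : ∃ K : ℝ, 0 < K ∧ ∀ z : Fin n → ℝ, ‖A⁻¹.mulVec z‖ ≤ K * ‖z‖ := by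
    obtain ⟨K, hK0, hK⟩ := (LinearMap.toContinuousLinearMap (Matrix.mulVecLin A⁻¹)).bound
    exact ⟨K, hK0, hK⟩
  refine ⟨1 / (4 * K ^ 2), by positivity, fun y => ?_⟩
  rw [quad_eq_sum_sq hA]
  have h1 : ‖y‖ ≤ K * ‖A.mulVec y‖ := by
    have := hK (A.mulVec y)
    rwa [Matrix.mulVec_mulVec, Matrix.nonsing_inv_mul _ (isUnit_iff_ne_zero.2 hdet),
      Matrix.one_mulVec] at this
  have h2 : ‖A.mulVec y‖ ^ 2 ≤ ∑ k, (A.mulVec y k) ^ 2 := by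
    have h0 : 0 ≤ ∑ k, (A.mulVec y k) ^ 2 := Finset.sum_nonneg fun k _ => sq_nonneg _
    rw [← Real.le_sqrt (norm_nonneg _) h0]
    refine (pi_norm_le_iff_of_nonneg (Real.sqrt_nonneg _)).2 fun k => ?_
    refine Real.abs_le_sqrt ?_
    exact Finset.single_le_sum (f := fun k => (A.mulVec y k) ^ 2) (fun k _ => sq_nonneg _)
      (Finset.mem_univ k)
  calc 1 / (4 * K ^ 2) * ‖y‖ ^ 2 ≤ 1 / (4 * K ^ 2) * (K * ‖A.mulVec y‖) ^ 2 := by gcongr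
    _ = 1 / 4 * ‖A.mulVec y‖ ^ 2 := by field_simp
    _ ≤ _ := by gcongr

lemma gw_integrable {G : Matrix (Fin n) (Fin n) ℝ} (hG : G.PosDef) {f : (Fin n → ℝ) → ℝ}
    (hf : PolyGrowth f) : Integrable (fun y => f y * gw G y) := by
  obtain ⟨c, hc, hq⟩ := quad_coercive hG
  obtain ⟨hfc, C, N, hC, hb⟩ := hf
  refine ((integrable_pow_mul_exp hc N).const_mul C).mono' ?_ (Eventually.of_forall fun y => ?_)
  · refine (hfc.mul ?_).aestronglyMeasurable
    unfold gw
    fun_prop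
  · rw [norm_mul, Real.norm_eq_abs, gw, Real.norm_of_nonneg (Real.exp_pos _).le, ← mul_assoc]
    have := hq y
    gcongr
    exact hb y

/-- Normalisation, by the linear change of variables `z = A y` where `G = Aᵀ A`. -/
lemma integral_gw {G : Matrix (Fin n) (Fin n) ℝ} (hG : G.PosDef) :
    ∫ y, gw G y = (4 * Real.pi) ^ ((n : ℝ) / 2) * (Real.sqrt G.det)⁻¹ := by
  obtain ⟨A, hA, hdet⟩ := exists_factor hG
  have hsq : Real.sqrt G.det = |A.det| := by
    rw [hA, Matrix.det_mul, Matrix.det_transpose, ← sq, Real.sqrt_sq_eq_abs]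
  have h1 : ∫ z : Fin n → ℝ, ∏ i, Real.exp (-(1 / 4) * (z i) ^ 2)
      = (4 * Real.pi) ^ ((n : ℝ) / 2) := by
    rw [integral_fintype_prod_volume_eq_pow (fun x : ℝ => Real.exp (-(1 / 4) * x ^ 2)),
      integral_gaussian, Fintype.card_fin, Real.sqrt_eq_rpow, ← Real.rpow_natCast,
      ← Real.rpow_mul (by positivity)]
    congr 1
    · ring
    · ring
  have h2 := Real.map_matrix_volume_pi_eq_smul_volume_pi hdet
  have h3 : ∫ z, ∏ i, Real.exp (-(1 / 4) * (z i) ^ 2) ∂(Measure.map (Matrix.toLin' A) volume)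
      = ∫ y, gw G y := by
    rw [integral_map (LinearMap.continuous_of_finiteDimensional _).aemeasurable
      (by fun_prop : Continuous fun z : Fin n → ℝ =>
        ∏ i, Real.exp (-(1 / 4) * (z i) ^ 2)).aestronglyMeasurable]
    refine integral_congr_ae (Eventually.of_forall fun y => ?_)
    simp only [gw]
    rw [quad_eq_sum_sq hA, ← Real.exp_sum, Finset.mul_sum, ← Finset.sum_neg_distrib]
    simp [Matrix.toLin'_apply]
  rw [← h3, h2, integral_smul_measure, h1, hsq, ENNReal.toReal_ofReal (abs_nonneg _), abs_inv,
    smul_eq_mul, mul_comm]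

lemma gw_hasFDerivAt {G : Matrix (Fin n) (Fin n) ℝ} (hG : G.IsSymm) (y v : Fin n → ℝ) :
    DifferentiableAt ℝ (gw G) y ∧
      fderiv ℝ (gw G) y v = -(1 / 2) * (v ⬝ᵥ G.mulVec y) * gw G y := by
  have hd : HasFDerivAt (gw G) (gw G y • -((1 / 4 : ℝ) • ∑ i, ∑ j, G i j •
      (y i • (ContinuousLinearMap.proj j : (Fin n → ℝ) →L[ℝ] ℝ) +
        y j • (ContinuousLinearMap.proj i : (Fin n → ℝ) →L[ℝ] ℝ)))) y := by
    have hp : ∀ i, HasFDerivAt (fun y : Fin n → ℝ => y i)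
      (ContinuousLinearMap.proj i : (Fin n → ℝ) →L[ℝ] ℝ) y := fun i => hasFDerivAt_apply i y
    exact (((HasFDerivAt.fun_sum fun i _ => HasFDerivAt.fun_sum fun j _ =>
      ((hp i).mul (hp j)).const_mul (G i j)).const_mul (1 / 4)).neg).exp
  refine ⟨hd.differentiableAt, ?_⟩
  rw [hd.fderiv]
  have h1 : ∑ i, ∑ j, G i j * (y i * v j + y j * v i) = 2 * (v ⬝ᵥ G.mulVec y) := by
    have e1 : ∑ i, ∑ j, G i j * (y j * v i) = v ⬝ᵥ G.mulVec y := by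
      simp only [dotProduct, Matrix.mulVec, Finset.mul_sum]
      exact Finset.sum_congr rfl fun i _ => Finset.sum_congr rfl fun j _ => by ring
    have e2 : ∑ i, ∑ j, G i j * (y i * v j) = ∑ i, ∑ j, G i j * (y j * v i) := by
      rw [Finset.sum_comm]
      exact Finset.sum_congr rfl fun i _ => Finset.sum_congr rfl fun j _ => by
        rw [hG.apply]
    simp only [mul_add, Finset.sum_add_distrib]
    rw [e2, e1]; ring
  simp only [smul_apply, neg_apply, sum_apply, add_apply, ContinuousLinearMap.proj_apply,
    smul_eq_mul, h1]
  ring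

/-- Gaussian integration by parts: since `G (G⁻¹ eᵢ) = eᵢ`, differentiating the weight in the
direction of the `i`-th row of `G⁻¹` produces the coordinate `yᵢ`. -/
lemma gw_ibp {G : Matrix (Fin n) (Fin n) ℝ} (hG : G.PosDef) (i : Fin n)
    {f : (Fin n → ℝ) → ℝ} (hd : Differentiable ℝ f) (hf : PolyGrowth f)
    (hf' : PolyGrowth fun y => fderiv ℝ f y (G⁻¹ i)) :
    ∫ y, (y i * f y) * gw G y = 2 * ∫ y, fderiv ℝ f y (G⁻¹ i) * gw G y := by
  have hsymm : G.IsSymm := by simpa using hG.isHermitian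
  have hv : ∀ y : Fin n → ℝ, (G⁻¹ i) ⬝ᵥ G.mulVec y = y i := by
    intro y
    have : (G⁻¹.mulVec (G.mulVec y)) i = y i := by
      rw [Matrix.mulVec_mulVec, Matrix.nonsing_inv_mul _ (isUnit_iff_ne_zero.2 hG.det_pos.ne'),
        Matrix.one_mulVec]
    exact this
  have hg : ∀ y, f y * fderiv ℝ (gw G) y (G⁻¹ i) = -(1 / 2) * ((y i * f y) * gw G y) := by
    intro y
    rw [(gw_hasFDerivAt hsymm y _).2, hv]; ring
  have key := integral_mul_fderiv_eq_neg_fderiv_mul_of_integrable (μ := volume) (f := f)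
    (g := gw G) (v := G⁻¹ i) (gw_integrable hG hf')
    (by
      simp only [hg]
      exact (gw_integrable hG ((PolyGrowth.coord i).mul hf)).const_mul _)
    (gw_integrable hG hf) (fun x _ => hd x) (fun x _ => (gw_hasFDerivAt hsymm x 0).1)
  simp only [hg] at key
  rw [integral_const_mul] at key
  linarith

lemma gw_moment_two {G : Matrix (Fin n) (Fin n) ℝ} (hG : G.PosDef) (a b : Fin n) :
    ∫ y, (y a * y b) * gw G y = 2 * G⁻¹ a b * ∫ y, gw G y := by
  have hder : ∀ y : Fin n → ℝ, fderiv ℝ (fun y : Fin n → ℝ => y b) y (G⁻¹ a) = G⁻¹ a b := by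
    intro y
    rw [(hasFDerivAt_apply b y).fderiv]; rfl
  rw [gw_ibp hG a (by fun_prop) (.coord b) (by simp only [hder]; exact .const _)]
  simp only [hder]
  rw [integral_const_mul, mul_assoc]

lemma gw_moment_four {G : Matrix (Fin n) (Fin n) ℝ} (hG : G.PosDef) (a b c d : Fin n) :
    ∫ y, (y a * (y b * y c * y d)) * gw G y = 2 * (G⁻¹ a b * (∫ y, (y c * y d) * gw G y) +
      G⁻¹ a c * (∫ y, (y b * y d) * gw G y) + G⁻¹ a d * (∫ y, (y b * y c) * gw G y)) := by
  have hp : ∀ (i : Fin n) (y : Fin n → ℝ), HasFDerivAt (fun y : Fin n → ℝ => y i)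
      (ContinuousLinearMap.proj i : (Fin n → ℝ) →L[ℝ] ℝ) y := fun i y => hasFDerivAt_apply i y
  have hder : ∀ y : Fin n → ℝ, fderiv ℝ (fun y : Fin n → ℝ => y b * y c * y d) y (G⁻¹ a) =
      G⁻¹ a b * (y c * y d) + G⁻¹ a c * (y b * y d) + G⁻¹ a d * (y b * y c) := by
    intro y
    rw [(((hp b y).fun_mul (hp c y)).fun_mul (hp d y)).fderiv]
    simp only [smul_apply, add_apply, ContinuousLinearMap.proj_apply, smul_eq_mul]
    ring
  have h2 : ∀ i j : Fin n, PolyGrowth (fun y : Fin n → ℝ => y i * y j) :=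
    fun i j => (PolyGrowth.coord i).mul (.coord j)
  have i2 : ∀ (r : ℝ) (i j : Fin n), Integrable (fun y : Fin n → ℝ => r * (y i * y j * gw G y)) :=
    fun r i j => (gw_integrable hG (h2 i j)).const_mul r
  rw [gw_ibp hG a (by fun_prop) ((h2 b c).mul (.coord d)) (by
    simp only [hder]
    exact (((PolyGrowth.const _).mul (h2 _ _)).add ((PolyGrowth.const _).mul (h2 _ _))).add
      ((PolyGrowth.const _).mul (h2 _ _)))]
  simp only [hder, add_mul, mul_assoc (G⁻¹ _ _)]
  rw [integral_add ((i2 _ _ _).fun_add (i2 _ _ _)) (i2 _ _ _), integral_add (i2 _ _ _) (i2 _ _ _),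
    integral_const_mul, integral_const_mul, integral_const_mul]

lemma gw_moment_six {G : Matrix (Fin n) (Fin n) ℝ} (hG : G.PosDef) (a b c d e f : Fin n) :
    ∫ y, (y a * (y b * y c * y d * y e * y f)) * gw G y =
      2 * (G⁻¹ a b * (∫ y, (y c * (y d * y e * y f)) * gw G y) +
      G⁻¹ a c * (∫ y, (y b * (y d * y e * y f)) * gw G y) +
      G⁻¹ a d * (∫ y, (y b * (y c * y e * y f)) * gw G y) +
      G⁻¹ a e * (∫ y, (y b * (y c * y d * y f)) * gw G y) +
      G⁻¹ a f * (∫ y, (y b * (y c * y d * y e)) * gw G y)) := by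
  have hp : ∀ (i : Fin n) (y : Fin n → ℝ), HasFDerivAt (fun y : Fin n → ℝ => y i)
      (ContinuousLinearMap.proj i : (Fin n → ℝ) →L[ℝ] ℝ) y := fun i y => hasFDerivAt_apply i y
  have hder : ∀ y : Fin n → ℝ,
      fderiv ℝ (fun y : Fin n → ℝ => y b * y c * y d * y e * y f) y (G⁻¹ a) =
      G⁻¹ a b * (y c * (y d * y e * y f)) + G⁻¹ a c * (y b * (y d * y e * y f)) +
      G⁻¹ a d * (y b * (y c * y e * y f)) + G⁻¹ a e * (y b * (y c * y d * y f)) +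
      G⁻¹ a f * (y b * (y c * y d * y e)) := by
    intro y
    rw [(((((hp b y).fun_mul (hp c y)).fun_mul (hp d y)).fun_mul (hp e y)).fun_mul (hp f y)).fderiv]
    simp only [smul_apply, add_apply, ContinuousLinearMap.proj_apply, smul_eq_mul]
    ring
  have h4 : ∀ i j k l : Fin n, PolyGrowth (fun y : Fin n → ℝ => y i * (y j * y k * y l)) :=
    fun i j k l => (PolyGrowth.coord i).mul (((PolyGrowth.coord j).mul (.coord k)).mul (.coord l))
  have h5 : ∀ (r : ℝ) (i j k l : Fin n),
      PolyGrowth (fun y : Fin n → ℝ => r * (y i * (y j * y k * y l))) :=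
    fun r i j k l => (PolyGrowth.const r).mul (h4 i j k l)
  have i4 : ∀ (r : ℝ) (i j k l : Fin n),
      Integrable (fun y : Fin n → ℝ => r * (y i * (y j * y k * y l) * gw G y)) :=
    fun r i j k l => (gw_integrable hG (h4 i j k l)).const_mul r
  rw [gw_ibp hG a (by fun_prop)
    (((((PolyGrowth.coord b).mul (.coord c)).mul (.coord d)).mul (.coord e)).mul (.coord f)) (by
    simp only [hder]
    exact ((((h5 _ _ _ _ _).add (h5 _ _ _ _ _)).add (h5 _ _ _ _ _)).add (h5 _ _ _ _ _)).add
      (h5 _ _ _ _ _))]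
  simp only [hder, add_mul, mul_assoc (G⁻¹ _ _)]
  rw [integral_add ((((i4 _ _ _ _ _).fun_add (i4 _ _ _ _ _)).fun_add (i4 _ _ _ _ _)).fun_add (i4 _ _ _ _ _))
      (i4 _ _ _ _ _),
    integral_add (((i4 _ _ _ _ _).fun_add (i4 _ _ _ _ _)).fun_add (i4 _ _ _ _ _)) (i4 _ _ _ _ _),
    integral_add ((i4 _ _ _ _ _).fun_add (i4 _ _ _ _ _)) (i4 _ _ _ _ _),
    integral_add (i4 _ _ _ _ _) (i4 _ _ _ _ _),
    integral_const_mul, integral_const_mul, integral_const_mul, integral_const_mul,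
    integral_const_mul]

end Gauss
/-! ### Wick contractions -/

section Wick

variable {n : ℕ}

/-- The unnormalised Gaussian expectation `∫ f(y) exp (-yᵀ G y / 4) dy`. -/
noncomputable def gE (G : Matrix (Fin n) (Fin n) ℝ) (f : (Fin n → ℝ) → ℝ) : ℝ :=
  ∫ y, f y * gw G y

lemma gE_sum {ι : Type*} [Fintype ι] {G : Matrix (Fin n) (Fin n) ℝ} (hG : G.PosDef)
    {F : ι → (Fin n → ℝ) → ℝ} (hF : ∀ i, PolyGrowth (F i)) :
    gE G (fun y => ∑ i, F i y) = ∑ i, gE G (F i) := by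
  simp only [gE, Finset.sum_mul]
  exact integral_finsetSum _ fun i _ => gw_integrable hG (hF i)

lemma gE_const_mul (G : Matrix (Fin n) (Fin n) ℝ) (c : ℝ) (f : (Fin n → ℝ) → ℝ) :
    gE G (fun y => c * f y) = c * gE G f := by
  simp only [gE, mul_assoc]
  exact integral_const_mul _ _

lemma gE_add {G : Matrix (Fin n) (Fin n) ℝ} (hG : G.PosDef) {f g : (Fin n → ℝ) → ℝ}
    (hf : PolyGrowth f) (hg : PolyGrowth g) :
    gE G (fun y => f y + g y) = gE G f + gE G g := by
  simp only [gE, add_mul]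
  exact integral_add (gw_integrable hG hf) (gw_integrable hG hg)

/-- The pairing sum of four Gaussian variables with covariance `2 g`. -/
def wick4 (g : Matrix (Fin n) (Fin n) ℝ) (a b c d : Fin n) : ℝ :=
  4 * (g a b * g c d + g a c * g b d + g a d * g b c)

lemma gE_four {G : Matrix (Fin n) (Fin n) ℝ} (hG : G.PosDef) (a b c d : Fin n) :
    gE G (fun y => y a * (y b * y c * y d)) = wick4 G⁻¹ a b c d * ∫ y, gw G y := by
  rw [gE, gw_moment_four hG, gw_moment_two hG, gw_moment_two hG, gw_moment_two hG, wick4]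
  ring

/-- Contraction of the six-index array `h` with two copies of the symmetric tensor `T`. -/
noncomputable def contr6 (T : Fin n → Fin n → Fin n → ℝ)
    (h : Fin n → Fin n → Fin n → Fin n → Fin n → Fin n → ℝ) : ℝ :=
  ∑ i, ∑ j, ∑ k, ∑ l, ∑ m, ∑ r, T i j k * T l m r * h i j k l m r

/-- The contraction with two copies of `T` of the six-point Gaussian moment: of the fifteen
pairings, nine join each copy of `T` to itself once and six join every index of one copy to the
other. -/
lemma contr6_wick {T : Fin n → Fin n → Fin n → ℝ} (hT : ∀ i j k, T i j k = T j i k)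
    (hT' : ∀ i j k, T i j k = T i k j) (g : Matrix (Fin n) (Fin n) ℝ) :
    contr6 T (fun i j k l m r => 2 * (g i j * wick4 g k l m r + g i k * wick4 g j l m r +
      g i l * wick4 g j k m r + g i m * wick4 g j k l r + g i r * wick4 g j k l m)) =
    24 * contr6 T (fun i j k l m r =>
      (2 * g i l * g j m + 3 * g i j * g l m) * g k r) := by
  have add : ∀ h h', contr6 T (fun i j k l m r => h i j k l m r + h' i j k l m r) =
      contr6 T h + contr6 T h' := by
    intro h h'
    simp only [contr6, mul_add, Finset.sum_add_distrib]
  have smul : ∀ (c : ℝ) h, contr6 T (fun i j k l m r => c * h i j k l m r) = c * contr6 T h := by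
    intro c h
    simp only [contr6, Finset.mul_sum, mul_left_comm c]
  have s12 : ∀ h, contr6 T h = contr6 T fun i j k l m r => h j i k l m r := by
    intro h
    unfold contr6
    rw [Finset.sum_comm]
    refine Finset.sum_congr rfl fun i _ => Finset.sum_congr rfl fun j _ =>
      Finset.sum_congr rfl fun k _ => ?_
    rw [hT j i k]
  have s23 : ∀ h, contr6 T h = contr6 T fun i j k l m r => h i k j l m r := by
    intro h
    refine Finset.sum_congr rfl fun i _ => ?_
    rw [Finset.sum_comm]
    refine Finset.sum_congr rfl fun j _ => Finset.sum_congr rfl fun k _ => ?_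
    rw [hT' i k j]
  have s45 : ∀ h, contr6 T h = contr6 T fun i j k l m r => h i j k m l r := by
    intro h
    refine Finset.sum_congr rfl fun i _ => Finset.sum_congr rfl fun j _ =>
      Finset.sum_congr rfl fun k _ => ?_
    rw [Finset.sum_comm]
    refine Finset.sum_congr rfl fun l _ => Finset.sum_congr rfl fun m _ => ?_
    simp only [hT m l]
  have s56 : ∀ h, contr6 T h = contr6 T fun i j k l m r => h i j k l r m := by
    intro h
    refine Finset.sum_congr rfl fun i _ => Finset.sum_congr rfl fun j _ =>
      Finset.sum_congr rfl fun k _ => Finset.sum_congr rfl fun l _ => ?_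
    rw [Finset.sum_comm]
    refine Finset.sum_congr rfl fun m _ => Finset.sum_congr rfl fun r _ => ?_
    rw [hT' l r m]
  set X := contr6 T (fun i j k l m r => g i j * (g k r * g l m)) with hX
  -- `X` and `Y` represent the two classes of pairings.
  set Y := contr6 T (fun i j k l m r => g i l * (g j m * g k r)) with hY
  have a1 : contr6 T (fun i j k l m r => g i j * (g k l * g m r)) = X := by
    rw [s45, s56]
  have a2 : contr6 T (fun i j k l m r => g i j * (g k m * g l r)) = X := by
    rw [s56]
  have b1 : contr6 T (fun i j k l m r => g i l * (g j k * g m r)) = X := by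
    rw [s12, s23, s45, s56, hX]
    congr; funext i j k l m r; ring
  have b3 : contr6 T (fun i j k l m r => g i l * (g j r * g k m)) = Y := by
    rw [s56]
  have A1 : contr6 T (fun i j k l m r => g i j * wick4 g k l m r) = 12 * X := by
    simp only [wick4, mul_left_comm _ (4 : ℝ), mul_add]
    rw [add, add, smul, smul, smul, a1, a2, ← hX]; ring
  have A2 : contr6 T (fun i j k l m r => g i k * wick4 g j l m r) = 12 * X := by
    rw [s23, A1]
  have B1 : contr6 T (fun i j k l m r => g i l * wick4 g j k m r) = 4 * X + 8 * Y := by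
    simp only [wick4, mul_left_comm _ (4 : ℝ), mul_add]
    rw [add, add, smul, smul, smul, b1, b3, ← hY]; ring
  have B2 : contr6 T (fun i j k l m r => g i m * wick4 g j k l r) = 4 * X + 8 * Y := by
    rw [s45, B1]
  have B3 : contr6 T (fun i j k l m r => g i r * wick4 g j k l m) = 4 * X + 8 * Y := by
    rw [s56, B2]
  have R : contr6 T (fun i j k l m r => (2 * g i l * g j m + 3 * g i j * g l m) * g k r) =
      2 * Y + 3 * X := by
    rw [hX, hY, ← smul, ← smul, ← add]
    congr; funext i j k l m r; ring
  rw [smul, add, add, add, add, A1, A2, B1, B2, B3, R]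
  ring

lemma gE_two_sum {G : Matrix (Fin n) (Fin n) ℝ} (hG : G.PosDef) (P : Fin n → Fin n → ℝ) :
    gE G (fun y => 1 / 2 * ∑ i, ∑ j, P i j * (y i * y j)) =
      (∑ i, ∑ j, G⁻¹ i j * P i j) * ∫ y, gw G y := by
  have h2 : ∀ i j, PolyGrowth fun y : Fin n → ℝ => P i j * (y i * y j) :=
    fun i j => (PolyGrowth.const _).mul ((PolyGrowth.coord i).mul (.coord j))
  rw [gE_const_mul, gE_sum hG fun i => .sum _ (h2 i), Finset.mul_sum, Finset.sum_mul]
  refine Finset.sum_congr rfl fun i _ => ?_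
  rw [gE_sum hG (h2 i), Finset.mul_sum, Finset.sum_mul]
  refine Finset.sum_congr rfl fun j _ => ?_
  rw [gE_const_mul, gE, gw_moment_two hG]
  ring

lemma gE_four_sum {G : Matrix (Fin n) (Fin n) ℝ} (hG : G.PosDef)
    (R : Fin n → Fin n → Fin n → Fin n → ℝ) :
    gE G (fun y => ∑ i, ∑ j, ∑ k, ∑ l, R i j k l * (y i * (y j * y k * y l))) =
      (∑ i, ∑ j, ∑ k, ∑ l, R i j k l * wick4 G⁻¹ i j k l) * ∫ y, gw G y := by
  have h4 : ∀ i j k l, PolyGrowth fun y : Fin n → ℝ => R i j k l * (y i * (y j * y k * y l)) :=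
    fun i j k l => (PolyGrowth.const _).mul
      ((PolyGrowth.coord i).mul (((PolyGrowth.coord j).mul (.coord k)).mul (.coord l)))
  rw [gE_sum hG fun i => .sum _ fun j => .sum _ fun k => .sum _ fun l => h4 i j k l,
    Finset.sum_mul]
  refine Finset.sum_congr rfl fun i _ => ?_
  rw [gE_sum hG fun j => .sum _ fun k => .sum _ fun l => h4 i j k l, Finset.sum_mul]
  refine Finset.sum_congr rfl fun j _ => ?_
  rw [gE_sum hG fun k => .sum _ fun l => h4 i j k l, Finset.sum_mul]
  refine Finset.sum_congr rfl fun k _ => ?_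
  rw [gE_sum hG fun l => h4 i j k l, Finset.sum_mul]
  refine Finset.sum_congr rfl fun l _ => ?_
  rw [gE_const_mul, gE_four hG]
  ring

/-- The expectation of the quartic Taylor term. -/
lemma gE_quartic {G : Matrix (Fin n) (Fin n) ℝ} (hG : G.PosDef)
    {R : Fin n → Fin n → Fin n → Fin n → ℝ} (h23 : ∀ i j k l, R i j k l = R i k j l)
    (h34 : ∀ i j k l, R i j k l = R i j l k) :
    gE G (fun y => 1 / 24 * ∑ i, ∑ j, ∑ k, ∑ l, R i j k l * (y i * y j * y k * y l)) =
      (1 / 2 * ∑ i, ∑ j, ∑ k, ∑ l, G⁻¹ i j * G⁻¹ k l * R i j k l) * ∫ y, gw G y := by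
  have e : ∀ (y : Fin n → ℝ) (i j k l : Fin n), y i * y j * y k * y l =
    y i * (y j * y k * y l) := fun y i j k l => by ring
  simp only [e]
  rw [gE_const_mul, gE_four_sum hG, ← mul_assoc]
  congr 1
  have s23 : ∀ h : Fin n → Fin n → Fin n → Fin n → ℝ, ∑ i, ∑ j, ∑ k, ∑ l, R i j k l * h i j k l =
      ∑ i, ∑ j, ∑ k, ∑ l, R i j k l * h i k j l := by
    intro h
    refine Finset.sum_congr rfl fun i _ => ?_
    rw [Finset.sum_comm]
    exact Finset.sum_congr rfl fun j _ => Finset.sum_congr rfl fun k _ =>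
      Finset.sum_congr rfl fun l _ => by rw [h23 i k j l]
  have s34 : ∀ h : Fin n → Fin n → Fin n → Fin n → ℝ, ∑ i, ∑ j, ∑ k, ∑ l, R i j k l * h i j k l =
      ∑ i, ∑ j, ∑ k, ∑ l, R i j k l * h i j l k := by
    intro h
    refine Finset.sum_congr rfl fun i _ => Finset.sum_congr rfl fun j _ => ?_
    rw [Finset.sum_comm]
    exact Finset.sum_congr rfl fun k _ => Finset.sum_congr rfl fun l _ => by rw [h34 i j l k]
  set X := ∑ i, ∑ j, ∑ k, ∑ l, R i j k l * (G⁻¹ i j * G⁻¹ k l) with hX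
  have e2 : ∑ i, ∑ j, ∑ k, ∑ l, R i j k l * (G⁻¹ i k * G⁻¹ j l) = X :=
    s23 fun i j k l => G⁻¹ i k * G⁻¹ j l
  have e3 : ∑ i, ∑ j, ∑ k, ∑ l, R i j k l * (G⁻¹ i l * G⁻¹ j k) = X :=
    (s34 fun i j k l => G⁻¹ i l * G⁻¹ j k).trans e2
  simp only [wick4, mul_left_comm _ (4 : ℝ), mul_add, Finset.sum_add_distrib, ← Finset.mul_sum]
  rw [e2, e3, ← hX]
  have e4 : ∑ i, ∑ j, ∑ k, ∑ l, G⁻¹ i j * G⁻¹ k l * R i j k l = X := by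
    simp only [hX, mul_comm (R _ _ _ _)]
  rw [e4]
  ring

/-- The expectation of the product of a cubic and a linear form. -/
lemma gE_cubic_linear {G : Matrix (Fin n) (Fin n) ℝ} (hG : G.PosDef)
    {T : Fin n → Fin n → Fin n → ℝ} (hT : ∀ i j k, T i j k = T j i k)
    (hT' : ∀ i j k, T i j k = T i k j) (p : Fin n → ℝ) :
    gE G (fun y => (1 / 6 * ∑ i, ∑ j, ∑ k, T i j k * (y i * y j * y k)) * ∑ l, y l * p l) =
      (2 * ∑ i, ∑ j, ∑ k, ∑ l, G⁻¹ i j * G⁻¹ k l * T i k l * p j) * ∫ y, gw G y := by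
  have hsymm : ∀ i j, G⁻¹ i j = G⁻¹ j i := fun i j => by
    simpa using (hG.inv.isHermitian.apply i j).symm
  have e : ∀ y : Fin n → ℝ,
      (1 / 6 * ∑ i, ∑ j, ∑ k, T i j k * (y i * y j * y k)) * ∑ l, y l * p l =
      1 / 6 * ∑ l, ∑ i, ∑ j, ∑ k, (T i j k * p l) * (y l * (y i * y j * y k)) := by
    intro y
    rw [mul_assoc, Finset.mul_sum]
    simp only [Finset.sum_mul]
    congr 1
    exact Finset.sum_congr rfl fun l _ => Finset.sum_congr rfl fun i _ =>
      Finset.sum_congr rfl fun j _ => Finset.sum_congr rfl fun k _ => by ring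
  simp only [e]
  rw [gE_const_mul, gE_four_sum hG, ← mul_assoc]
  congr 1
  have s23 : ∀ h : Fin n → Fin n → Fin n → Fin n → ℝ,
      ∑ l, ∑ i, ∑ j, ∑ k, T i j k * p l * h l i j k =
      ∑ l, ∑ i, ∑ j, ∑ k, T i j k * p l * h l j i k := by
    intro h
    refine Finset.sum_congr rfl fun l _ => ?_
    rw [Finset.sum_comm]
    exact Finset.sum_congr rfl fun i _ => Finset.sum_congr rfl fun j _ =>
      Finset.sum_congr rfl fun k _ => by rw [hT j i k]
  have s34 : ∀ h : Fin n → Fin n → Fin n → Fin n → ℝ,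
      ∑ l, ∑ i, ∑ j, ∑ k, T i j k * p l * h l i j k =
      ∑ l, ∑ i, ∑ j, ∑ k, T i j k * p l * h l i k j := by
    intro h
    refine Finset.sum_congr rfl fun l _ => Finset.sum_congr rfl fun i _ => ?_
    rw [Finset.sum_comm]
    exact Finset.sum_congr rfl fun j _ => Finset.sum_congr rfl fun k _ => by rw [hT' i k j]
  set X := ∑ l, ∑ i, ∑ j, ∑ k, T i j k * p l * (G⁻¹ l i * G⁻¹ j k) with hX
  have e2 : ∑ l, ∑ i, ∑ j, ∑ k, T i j k * p l * (G⁻¹ l j * G⁻¹ i k) = X :=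
    s23 fun l i j k => G⁻¹ l j * G⁻¹ i k
  have e3 : ∑ l, ∑ i, ∑ j, ∑ k, T i j k * p l * (G⁻¹ l k * G⁻¹ i j) = X :=
    (s34 fun l i j k => G⁻¹ l k * G⁻¹ i j).trans e2
  simp only [wick4, mul_left_comm _ (4 : ℝ), mul_add, Finset.sum_add_distrib, ← Finset.mul_sum]
  rw [e2, e3, ← hX]
  have e4 : ∑ i, ∑ j, ∑ k, ∑ l, G⁻¹ i j * G⁻¹ k l * T i k l * p j = X := by
    rw [Finset.sum_comm]
    exact Finset.sum_congr rfl fun l _ => Finset.sum_congr rfl fun i _ =>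
      Finset.sum_congr rfl fun j _ => Finset.sum_congr rfl fun k _ => by rw [hsymm i l]; ring
  rw [e4]
  ring

/-- The expectation of the square of a cubic form. -/
lemma gE_cubic_sq {G : Matrix (Fin n) (Fin n) ℝ} (hG : G.PosDef)
    {T : Fin n → Fin n → Fin n → ℝ} (hT : ∀ i j k, T i j k = T j i k)
    (hT' : ∀ i j k, T i j k = T i k j) :
    gE G (fun y => (1 / 6 * ∑ i, ∑ j, ∑ k, T i j k * (y i * y j * y k)) *
        (1 / 6 * ∑ i, ∑ j, ∑ k, T i j k * (y i * y j * y k))) =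
      (2 / 3 * ∑ i, ∑ j, ∑ l, ∑ m, ∑ k, ∑ r, (2 * G⁻¹ i l * G⁻¹ j m + 3 * G⁻¹ i j * G⁻¹ l m) *
        G⁻¹ k r * T i j k * T l m r) * ∫ y, gw G y := by
  have e : ∀ y : Fin n → ℝ, (1 / 6 * ∑ i, ∑ j, ∑ k, T i j k * (y i * y j * y k)) *
      (1 / 6 * ∑ i, ∑ j, ∑ k, T i j k * (y i * y j * y k)) =
      1 / 36 * ∑ i, ∑ j, ∑ k, ∑ l, ∑ m, ∑ r, (T i j k * T l m r) *
        (y i * (y j * y k * y l * y m * y r)) := by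
    intro y
    rw [mul_mul_mul_comm]
    norm_num
    simp only [Finset.sum_mul]
    simp only [Finset.mul_sum]
    exact Finset.sum_congr rfl fun i _ => Finset.sum_congr rfl fun j _ =>
      Finset.sum_congr rfl fun k _ => Finset.sum_congr rfl fun l _ =>
      Finset.sum_congr rfl fun m _ => Finset.sum_congr rfl fun r _ => by ring
  have h6 : ∀ i j k l m r, PolyGrowth fun y : Fin n → ℝ => (T i j k * T l m r) *
        (y i * (y j * y k * y l * y m * y r)) :=
    fun i j k l m r => (PolyGrowth.const _).mul ((PolyGrowth.coord i).mul
      (((((PolyGrowth.coord j).mul (.coord k)).mul (.coord l)).mul (.coord m)).mul (.coord r)))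
  have main : gE G (fun y => ∑ i, ∑ j, ∑ k, ∑ l, ∑ m, ∑ r, (T i j k * T l m r) *
        (y i * (y j * y k * y l * y m * y r))) =
      contr6 T (fun i j k l m r => 2 * (G⁻¹ i j * wick4 G⁻¹ k l m r +
        G⁻¹ i k * wick4 G⁻¹ j l m r + G⁻¹ i l * wick4 G⁻¹ j k m r +
        G⁻¹ i m * wick4 G⁻¹ j k l r + G⁻¹ i r * wick4 G⁻¹ j k l m)) * ∫ y, gw G y := by
    unfold contr6
    rw [gE_sum hG fun i => .sum _ fun j => .sum _ fun k => .sum _ fun l => .sum _ fun m =>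
      .sum _ fun r => h6 i j k l m r, Finset.sum_mul]
    refine Finset.sum_congr rfl fun i _ => ?_
    rw [gE_sum hG fun j => .sum _ fun k => .sum _ fun l => .sum _ fun m =>
      .sum _ fun r => h6 i j k l m r, Finset.sum_mul]
    refine Finset.sum_congr rfl fun j _ => ?_
    rw [gE_sum hG fun k => .sum _ fun l => .sum _ fun m =>
      .sum _ fun r => h6 i j k l m r, Finset.sum_mul]
    refine Finset.sum_congr rfl fun k _ => ?_
    rw [gE_sum hG fun l => .sum _ fun m => .sum _ fun r => h6 i j k l m r, Finset.sum_mul]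
    refine Finset.sum_congr rfl fun l _ => ?_
    rw [gE_sum hG fun m => .sum _ fun r => h6 i j k l m r, Finset.sum_mul]
    refine Finset.sum_congr rfl fun m _ => ?_
    rw [gE_sum hG fun r => h6 i j k l m r, Finset.sum_mul]
    refine Finset.sum_congr rfl fun r _ => ?_
    have h4 := gE_four hG
    simp only [gE] at h4
    rw [gE_const_mul, gE, gw_moment_six hG, h4, h4, h4, h4, h4]
    ring
  simp only [e]
  rw [gE_const_mul, main, contr6_wick hT hT', ← mul_assoc]
  congr 1
  rw [← mul_assoc]
  norm_num
  refine Finset.sum_congr rfl fun i _ => Finset.sum_congr rfl fun j _ => ?_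
  -- The index `k` is summed third on one side and fifth on the other.
  rw [Finset.sum_comm]
  refine Finset.sum_congr rfl fun l _ => ?_
  rw [Finset.sum_comm]
  exact Finset.sum_congr rfl fun m _ => Finset.sum_congr rfl fun k _ =>
    Finset.sum_congr rfl fun r _ => by ring

end Wick

/-! ### Expansions in the scaling parameter, uniform up to polynomial factors -/

section Expansion

variable {n : ℕ}

/-- `f t y = O(t ^ k)` for `0 < t ≤ 1`, uniformly up to a polynomial factor in `y`. -/
def PolyBigO (k : ℕ) (f : ℝ → (Fin n → ℝ) → ℝ) : Prop :=
  ∃ (C : ℝ) (N : ℕ), 0 ≤ C ∧ ∀ t y, 0 < t → t ≤ 1 → |f t y| ≤ C * t ^ k * (1 + ‖y‖) ^ N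

lemma PolyBigO.add {k : ℕ} {f g : ℝ → (Fin n → ℝ) → ℝ} (hf : PolyBigO k f) (hg : PolyBigO k g) :
    PolyBigO k (fun t y => f t y + g t y) := by
  obtain ⟨C, N, hC, hfC⟩ := hf
  obtain ⟨D, M, hD, hgD⟩ := hg
  refine ⟨C + D, N + M, add_nonneg hC hD, fun t y ht ht1 => (abs_add_le _ _).trans ?_⟩
  have h1 : (1 : ℝ) ≤ 1 + ‖y‖ := by linarith [norm_nonneg y]
  have h2 : (1 + ‖y‖) ^ N ≤ (1 + ‖y‖) ^ (N + M) := pow_le_pow_right₀ h1 (by omega)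
  have h3 : (1 + ‖y‖) ^ M ≤ (1 + ‖y‖) ^ (N + M) := pow_le_pow_right₀ h1 (by omega)
  calc |f t y| + |g t y| ≤ C * t ^ k * (1 + ‖y‖) ^ N + D * t ^ k * (1 + ‖y‖) ^ M :=
        add_le_add (hfC t y ht ht1) (hgD t y ht ht1)
    _ ≤ C * t ^ k * (1 + ‖y‖) ^ (N + M) + D * t ^ k * (1 + ‖y‖) ^ (N + M) := by gcongr
    _ = _ := by ring

lemma PolyBigO.mul {k l : ℕ} {f g : ℝ → (Fin n → ℝ) → ℝ} (hf : PolyBigO k f)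
    (hg : PolyBigO l g) : PolyBigO (k + l) (fun t y => f t y * g t y) := by
  obtain ⟨C, N, hC, hfC⟩ := hf
  obtain ⟨D, M, hD, hgD⟩ := hg
  refine ⟨C * D, N + M, mul_nonneg hC hD, fun t y ht ht1 => ?_⟩
  rw [abs_mul]
  calc |f t y| * |g t y| ≤ (C * t ^ k * (1 + ‖y‖) ^ N) * (D * t ^ l * (1 + ‖y‖) ^ M) :=
        mul_le_mul (hfC t y ht ht1) (hgD t y ht ht1) (abs_nonneg _) (by positivity)
    _ = _ := by rw [pow_add, pow_add]; ring

lemma PolyBigO.mono {k l : ℕ} (hkl : l ≤ k) {f : ℝ → (Fin n → ℝ) → ℝ} (hf : PolyBigO k f) :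
    PolyBigO l f := by
  obtain ⟨C, N, hC, hfC⟩ := hf
  refine ⟨C, N, hC, fun t y ht ht1 => (hfC t y ht ht1).trans ?_⟩
  have : t ^ k ≤ t ^ l := pow_le_pow_of_le_one ht.le ht1 hkl
  gcongr

lemma PolyBigO.tpow (k : ℕ) : PolyBigO k (fun (t : ℝ) (_ : Fin n → ℝ) => t ^ k) :=
  ⟨1, 0, zero_le_one, fun t y ht _ => by simp [abs_of_pos ht]⟩

lemma PolyGrowth.polyBigO {a : (Fin n → ℝ) → ℝ} (ha : PolyGrowth a) :
    PolyBigO 0 (fun _ y => a y) := by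
  obtain ⟨-, C, N, hC, h⟩ := ha
  exact ⟨C, N, hC, fun t y _ _ => by simpa using h y⟩

/-- `f t y = a₀ y + t a₁ y + t² a₂ y + t³ a₃ y + O(t⁴)`, uniformly up to polynomial factors. -/
structure Expands (f : ℝ → (Fin n → ℝ) → ℝ) (a₀ a₁ a₂ a₃ : (Fin n → ℝ) → ℝ) : Prop where
  h0 : PolyGrowth a₀
  h1 : PolyGrowth a₁
  h2 : PolyGrowth a₂
  h3 : PolyGrowth a₃
  rem : PolyBigO 4 (fun t y => f t y - (a₀ y + t * a₁ y + t ^ 2 * a₂ y + t ^ 3 * a₃ y))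

variable {f g : ℝ → (Fin n → ℝ) → ℝ} {a₀ a₁ a₂ a₃ b₀ b₁ b₂ b₃ : (Fin n → ℝ) → ℝ}

lemma polyBigO_poly (h0 : PolyGrowth a₀) (h1 : PolyGrowth a₁) (h2 : PolyGrowth a₂)
    (h3 : PolyGrowth a₃) :
    PolyBigO 0 (fun t y => a₀ y + t * a₁ y + t ^ 2 * a₂ y + t ^ 3 * a₃ y) := by
  have e1 := ((PolyBigO.tpow 1).mul h1.polyBigO).mono (Nat.zero_le _)
  have e2 := ((PolyBigO.tpow 2).mul h2.polyBigO).mono (Nat.zero_le _)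
  have e3 := ((PolyBigO.tpow 3).mul h3.polyBigO).mono (Nat.zero_le _)
  simpa only [pow_one] using ((h0.polyBigO.add e1).add e2).add e3

lemma Expands.polyBigO (hf : Expands f a₀ a₁ a₂ a₃) : PolyBigO 0 f := by
  have := (hf.rem.mono (Nat.zero_le 4)).add (polyBigO_poly hf.h0 hf.h1 hf.h2 hf.h3)
  simpa only [sub_add_cancel] using this

lemma Expands.polyBigO_one (hf : Expands f (fun _ => 0) a₁ a₂ a₃) : PolyBigO 1 f := by
  have e1 := (PolyBigO.tpow 1).mul hf.h1.polyBigO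
  have e2 := ((PolyBigO.tpow 2).mul hf.h2.polyBigO).mono (show 1 ≤ 2 + 0 by norm_num)
  have e3 := ((PolyBigO.tpow 3).mul hf.h3.polyBigO).mono (show 1 ≤ 3 + 0 by norm_num)
  have := (hf.rem.mono (show 1 ≤ 4 by norm_num)).add ((e1.add e2).add e3)
  convert this using 3
  ring

lemma Expands.add (hf : Expands f a₀ a₁ a₂ a₃) (hg : Expands g b₀ b₁ b₂ b₃) :
    Expands (fun t y => f t y + g t y) (fun y => a₀ y + b₀ y) (fun y => a₁ y + b₁ y)
      (fun y => a₂ y + b₂ y) (fun y => a₃ y + b₃ y) := by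
  refine ⟨hf.h0.add hg.h0, hf.h1.add hg.h1, hf.h2.add hg.h2, hf.h3.add hg.h3, ?_⟩
  convert hf.rem.add hg.rem using 3
  ring

lemma Expands.mul (hf : Expands f a₀ a₁ a₂ a₃) (hg : Expands g b₀ b₁ b₂ b₃) :
    Expands (fun t y => f t y * g t y) (fun y => a₀ y * b₀ y)
      (fun y => a₀ y * b₁ y + a₁ y * b₀ y)
      (fun y => a₀ y * b₂ y + a₁ y * b₁ y + a₂ y * b₀ y)
      (fun y => a₀ y * b₃ y + a₁ y * b₂ y + a₂ y * b₁ y + a₃ y * b₀ y) := by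
  refine ⟨hf.h0.mul hg.h0, (hf.h0.mul hg.h1).add (hf.h1.mul hg.h0),
    ((hf.h0.mul hg.h2).add (hf.h1.mul hg.h1)).add (hf.h2.mul hg.h0),
    (((hf.h0.mul hg.h3).add (hf.h1.mul hg.h2)).add (hf.h2.mul hg.h1)).add (hf.h3.mul hg.h0), ?_⟩
  have e1 : PolyBigO 4 _ := hf.polyBigO.mul hg.rem
  have e2 : PolyBigO 4 _ := hf.rem.mul (polyBigO_poly hg.h0 hg.h1 hg.h2 hg.h3)
  have e3 : PolyBigO 4 _ := (PolyBigO.tpow 4).mul (polyBigO_poly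
    (((hf.h1.mul hg.h3).add (hf.h2.mul hg.h2)).add (hf.h3.mul hg.h1))
    ((hf.h2.mul hg.h3).add (hf.h3.mul hg.h2)) (hf.h3.mul hg.h3) (PolyGrowth.const 0))
  convert (e1.add e2).add e3 using 3
  ring

lemma Expands.const (c : ℝ) : Expands (n := n) (fun _ _ => c) (fun _ => c) (fun _ => 0)
    (fun _ => 0) (fun _ => 0) := by
  refine ⟨.const _, .const _, .const _, .const _, 0, 0, le_rfl, fun t y _ _ => by simp⟩

/-- Third-order Taylor bound for the exponential that stays useful for large `|u|`: the factor
`1 + exp u`, unlike `exp |u|`, is harmless when `u` is very negative. -/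
lemma exp_remainder (u : ℝ) :
    |Real.exp u - (1 + u + 1 / 2 * (u * u) + 1 / 6 * (u * (u * u)))|
      ≤ 4 * u ^ 4 * (1 + Real.exp u) := by
  have hE := Real.exp_pos u
  rcases le_or_gt (-1) u with hu | hu
  · have h := Complex.norm_exp_sub_sum_le_norm_mul_exp (u : ℂ) 4
    have h1 : ‖Complex.exp u - ∑ m ∈ Finset.range 4, (u : ℂ) ^ m / m.factorial‖ =
        |Real.exp u - (1 + u + 1 / 2 * (u * u) + 1 / 6 * (u * (u * u)))| := by
      rw [← Real.norm_eq_abs, ← Complex.norm_real]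
      congr 1
      simp [Finset.sum_range_succ, Nat.factorial]
      ring
    rw [h1, Complex.norm_real, Real.norm_eq_abs] at h
    have h4 : |u| ^ 4 = u ^ 4 := by
      rw [← abs_pow]; exact abs_of_nonneg (by positivity)
    rw [h4] at h
    have h5 : Real.exp |u| ≤ 4 * (1 + Real.exp u) := by
      rcases le_or_gt 0 u with h0 | h0
      · rw [abs_of_nonneg h0]; linarith
      · have : Real.exp |u| ≤ Real.exp 1 := Real.exp_le_exp.2 (by rw [abs_of_neg h0]; linarith)
        linarith [Real.exp_one_lt_d9]
    calc _ ≤ u ^ 4 * Real.exp |u| := h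
      _ ≤ u ^ 4 * (4 * (1 + Real.exp u)) := by gcongr
      _ = _ := by ring
  · have hE1 : Real.exp u ≤ 1 := Real.exp_le_one_iff.2 (by linarith)
    have hv : 1 ≤ -u := by linarith
    have k2 : 1 ≤ u ^ 2 := by nlinarith
    have k4 : u ^ 2 ≤ u ^ 4 := by nlinarith
    have k1 : -u ≤ u ^ 2 := by nlinarith
    have k0 := mul_nonneg (sq_nonneg u) (by linarith : 0 ≤ -u - 1)
    have k3 : -(u * (u * u)) ≤ u ^ 4 := by nlinarith
    have k3' : u * (u * u) ≤ 0 := by nlinarith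
    have k5 : 4 * u ^ 4 ≤ 4 * u ^ 4 * (1 + Real.exp u) := by
      nlinarith [mul_nonneg (by positivity : 0 ≤ u ^ 4) hE.le]
    refine le_trans ?_ k5
    rw [abs_le]
    constructor <;> nlinarith

end Expansion

/-! ### Expansion of the rescaled integrand -/

section Kernel

variable {n : ℕ} {S φ : (Fin n → ℝ) → ℝ} {x : Fin n → ℝ}

lemma tay_polyGrowth {f : (Fin n → ℝ) → ℝ} (hf : ContDiff ℝ (⊤ : ℕ∞) f)
    (hc : HasCompactSupport f) (x : Fin n → ℝ) (k : ℕ) : PolyGrowth (tay f x k) := by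
  obtain ⟨C, hC, h⟩ := tay_bound hf hc x k
  refine ⟨tay_continuous hf x k, C, k, hC, fun y => (h y).trans ?_⟩
  have : ‖y‖ ≤ 1 + ‖y‖ := by linarith
  gcongr

lemma expands_amplitude (hφ : ContDiff ℝ (⊤ : ℕ∞) φ) (hφc : HasCompactSupport φ)
    (x : Fin n → ℝ) :
    Expands (fun t y => φ (x + t • y)) (fun _ => φ x) (tay φ x 1) (tay φ x 2) (tay φ x 3) := by
  refine ⟨.const _, tay_polyGrowth hφ hφc x 1, tay_polyGrowth hφ hφc x 2,
    tay_polyGrowth hφ hφc x 3, ?_⟩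
  obtain ⟨C, hC, h⟩ := tay_remainder hφ hφc x 3
  refine ⟨C, 4, hC, fun t y ht _ => ?_⟩
  have h1 := h (t • y)
  simp only [Finset.sum_range_succ, Finset.sum_range_zero, zero_add, tay_smul hφ, tay_zero,
    norm_smul, Real.norm_eq_abs, abs_of_pos ht, Nat.reduceAdd, pow_zero, one_mul, pow_one] at h1
  refine h1.trans ?_
  have : ‖y‖ ≤ 1 + ‖y‖ := by linarith
  rw [mul_pow, ← mul_assoc]
  gcongr

/-- The non-quadratic part of the rescaled exponent `-S (x + t y) / (2 t²)`. -/
noncomputable def excess (S : (Fin n → ℝ) → ℝ) (x : Fin n → ℝ) (t : ℝ) (y : Fin n → ℝ) : ℝ :=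
  -S (x + t • y) / (2 * t ^ 2) + 1 / 4 * ∑ i, ∑ j, hess n S x i j * (y i * y j)

lemma gw_mul_exp_excess (S : (Fin n → ℝ) → ℝ) (x : Fin n → ℝ) (t : ℝ) (y : Fin n → ℝ) :
    gw (hess n S x) y * Real.exp (excess S x t y) = Real.exp (-S (x + t • y) / (2 * t ^ 2)) := by
  rw [gw, excess, ← Real.exp_add]
  congr 1
  ring

lemma tay_one_eq_zero (hgrad : fderiv ℝ S x = 0) (y : Fin n → ℝ) : tay S x 1 y = 0 := by
  rw [tay_one]
  simp [pd, hgrad]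

lemma expands_excess (hS : ContDiff ℝ (⊤ : ℕ∞) S) (hSc : HasCompactSupport S)
    (hS0 : S x = 0) (hgrad : fderiv ℝ S x = 0) :
    Expands (excess S x) (fun _ => 0) (fun y => -(1 / 2) * tay S x 3 y)
      (fun y => -(1 / 2) * tay S x 4 y) (fun y => -(1 / 2) * tay S x 5 y) := by
  refine ⟨.const _, (PolyGrowth.const _).mul (tay_polyGrowth hS hSc x 3),
    (PolyGrowth.const _).mul (tay_polyGrowth hS hSc x 4),
    (PolyGrowth.const _).mul (tay_polyGrowth hS hSc x 5), ?_⟩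
  obtain ⟨C, hC, h⟩ := tay_remainder hS hSc x 5
  refine ⟨C, 6, hC, fun t y ht _ => ?_⟩
  have h1 := h (t • y)
  simp only [Finset.sum_range_succ, Finset.sum_range_zero, zero_add, tay_smul hS, tay_zero,
    norm_smul, Real.norm_eq_abs, abs_of_pos ht, Nat.reduceAdd, pow_zero, one_mul, pow_one,
    hS0, tay_one_eq_zero hgrad, tay_two hS] at h1
  have h2 : excess S x t y - (0 + t * (-(1 / 2) * tay S x 3 y) + t ^ 2 * (-(1 / 2) * tay S x 4 y)
      + t ^ 3 * (-(1 / 2) * tay S x 5 y)) = -(1 / (2 * t ^ 2)) *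
      (S (x + t • y) - (t * 0 + t ^ 2 *
        (1 / 2 * ∑ i, ∑ j, pd n i (pd n j S) x * (y i * y j)) + t ^ 3 * tay S x 3 y +
        t ^ 4 * tay S x 4 y + t ^ 5 * tay S x 5 y)) := by
    simp only [excess, hess, Matrix.of_apply]
    field_simp
    ring
  beta_reduce
  rw [h2, abs_mul, abs_neg, abs_of_pos (by positivity : 0 < 1 / (2 * t ^ 2))]
  have : ‖y‖ ≤ 1 + ‖y‖ := by linarith
  calc _ ≤ 1 / (2 * t ^ 2) * (C * (t * ‖y‖) ^ 6) := by gcongr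
    _ = 1 / 2 * (C * t ^ 4 * ‖y‖ ^ 6) := by field_simp
    _ ≤ 1 * (C * t ^ 4 * (1 + ‖y‖) ^ 6) := by gcongr; norm_num
    _ = _ := one_mul _

/-- Coefficient of `t` in the expansion of the rescaled integrand over the Gaussian weight. -/
noncomputable def coef1 (S φ : (Fin n → ℝ) → ℝ) (x y : Fin n → ℝ) : ℝ :=
  tay φ x 1 y - 1 / 2 * tay S x 3 y * φ x

/-- Coefficient of `t²` in the expansion of the rescaled integrand over the Gaussian weight. -/
noncomputable def coef2 (S φ : (Fin n → ℝ) → ℝ) (x y : Fin n → ℝ) : ℝ :=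
  tay φ x 2 y - 1 / 2 * tay S x 3 y * tay φ x 1 y +
    (1 / 8 * tay S x 3 y ^ 2 - 1 / 2 * tay S x 4 y) * φ x

/-- Coefficient of `t³` in the expansion of the rescaled integrand over the Gaussian weight. -/
noncomputable def coef3 (S φ : (Fin n → ℝ) → ℝ) (x y : Fin n → ℝ) : ℝ :=
  tay φ x 3 y - 1 / 2 * tay S x 3 y * tay φ x 2 y +
    (1 / 8 * tay S x 3 y ^ 2 - 1 / 2 * tay S x 4 y) * tay φ x 1 y +
    (-(1 / 2) * tay S x 5 y + 1 / 4 * tay S x 3 y * tay S x 4 y - 1 / 48 * tay S x 3 y ^ 3) * φ x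

/-- The truncated exponential series of the excess exponent, times the amplitude. -/
lemma expands_product (hS : ContDiff ℝ (⊤ : ℕ∞) S) (hSc : HasCompactSupport S)
    (hS0 : S x = 0) (hgrad : fderiv ℝ S x = 0) (hφ : ContDiff ℝ (⊤ : ℕ∞) φ)
    (hφc : HasCompactSupport φ) :
    Expands (fun t y => (1 + excess S x t y + 1 / 2 * (excess S x t y * excess S x t y) +
        1 / 6 * (excess S x t y * (excess S x t y * excess S x t y))) * φ (x + t • y))
      (fun _ => φ x) (coef1 S φ x) (coef2 S φ x) (coef3 S φ x) := by
  have hu := expands_excess hS hSc hS0 hgrad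
  have := ((((Expands.const 1).add hu).add ((Expands.const (1 / 2)).mul (hu.mul hu))).add
    ((Expands.const (1 / 6)).mul (hu.mul (hu.mul hu)))).mul (expands_amplitude hφ hφc x)
  convert this using 1 <;> funext y <;> (try simp only [coef1, coef2, coef3]) <;> ring

/-- The rescaled integrand minus its expansion is `O(t⁴)`; the weight on the right contains the
integrand's own exponential, to be controlled by coercivity of the phase. -/
lemma kernel_expansion (hS : ContDiff ℝ (⊤ : ℕ∞) S) (hSc : HasCompactSupport S)
    (hS0 : S x = 0) (hgrad : fderiv ℝ S x = 0) (hφ : ContDiff ℝ (⊤ : ℕ∞) φ)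
    (hφc : HasCompactSupport φ) :
    ∃ (C : ℝ) (N : ℕ), 0 ≤ C ∧ ∀ t y, 0 < t → t ≤ 1 →
      |Real.exp (-S (x + t • y) / (2 * t ^ 2)) * φ (x + t • y) -
        (φ x + t * coef1 S φ x y + t ^ 2 * coef2 S φ x y + t ^ 3 * coef3 S φ x y) *
          gw (hess n S x) y| ≤
      C * t ^ 4 * (1 + ‖y‖) ^ N *
        (gw (hess n S x) y + Real.exp (-S (x + t • y) / (2 * t ^ 2))) := by
  have hu := (expands_excess hS hSc hS0 hgrad).polyBigO_one
  have hA := (expands_amplitude hφ hφc x).polyBigO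
  have hu4 : PolyBigO 4 _ := (((hu.mul hu).mul (hu.mul hu)).mul hA)
  obtain ⟨C, N, hC, h1⟩ := hu4
  obtain ⟨D, M, hD, h2⟩ := (expands_product hS hSc hS0 hgrad hφ hφc).rem
  refine ⟨4 * C + D, N + M, by positivity, fun t y ht ht1 => ?_⟩
  rw [← gw_mul_exp_excess]
  have hg : 0 < gw (hess n S x) y := Real.exp_pos _
  specialize h1 t y ht ht1
  specialize h2 t y ht ht1
  have h3 := exp_remainder (excess S x t y)
  set u := excess S x t y
  set A := φ (x + t • y)
  set w := gw (hess n S x) y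
  set P := 1 + u + 1 / 2 * (u * u) + 1 / 6 * (u * (u * u))
  set k := φ x + t * coef1 S φ x y + t ^ 2 * coef2 S φ x y + t ^ 3 * coef3 S φ x y
  have hE := Real.exp_pos u
  have hone : (1 : ℝ) ≤ 1 + ‖y‖ := by linarith [norm_nonneg y]
  have hN : (1 + ‖y‖) ^ N ≤ (1 + ‖y‖) ^ (N + M) := pow_le_pow_right₀ hone (by omega)
  have hM : (1 + ‖y‖) ^ M ≤ (1 + ‖y‖) ^ (N + M) := pow_le_pow_right₀ hone (by omega)
  have hsplit : w * Real.exp u * A - k * w = w * ((Real.exp u - P) * A + (P * A - k)) := by ring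
  rw [hsplit, abs_mul, abs_of_pos hg]
  have h4 : |(Real.exp u - P) * A| ≤ 4 * (1 + Real.exp u) * (C * t ^ 4 * (1 + ‖y‖) ^ N) := by
    rw [abs_mul]
    have h5 : |u * u * (u * u) * A| = u ^ 4 * |A| := by
      rw [abs_mul, show u * u * (u * u) = u ^ 4 by ring, abs_of_nonneg (by positivity)]
    rw [h5] at h1
    calc _ ≤ 4 * u ^ 4 * (1 + Real.exp u) * |A| := by gcongr
      _ = 4 * (1 + Real.exp u) * (u ^ 4 * |A|) := by ring
      _ ≤ _ := by gcongr
  calc w * |(Real.exp u - P) * A + (P * A - k)|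
      ≤ w * (4 * (1 + Real.exp u) * (C * t ^ 4 * (1 + ‖y‖) ^ N) + D * t ^ 4 * (1 + ‖y‖) ^ M) := by
        gcongr
        exact (abs_add_le _ _).trans (add_le_add h4 h2)
    _ ≤ w * (4 * (1 + Real.exp u) * (C * t ^ 4 * (1 + ‖y‖) ^ (N + M)) +
          (1 + Real.exp u) * (D * t ^ 4 * (1 + ‖y‖) ^ (N + M))) := by
        have h6 : D * t ^ 4 * (1 + ‖y‖) ^ M ≤
            (1 + Real.exp u) * (D * t ^ 4 * (1 + ‖y‖) ^ (N + M)) :=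
          calc D * t ^ 4 * (1 + ‖y‖) ^ M ≤ 1 * (D * t ^ 4 * (1 + ‖y‖) ^ (N + M)) := by
                rw [one_mul]; gcongr
            _ ≤ _ := by gcongr; linarith
        refine mul_le_mul_of_nonneg_left (add_le_add ?_ h6) hg.le
        gcongr
    _ = _ := by ring

end Kernel

/-! ### The expansion for a globally smooth phase -/

section Core

variable {n : ℕ} {S φ : (Fin n → ℝ) → ℝ} {x : Fin n → ℝ}

lemma integral_rescale (f : (Fin n → ℝ) → ℝ) (x : Fin n → ℝ) {t : ℝ} (ht : 0 < t) :
    ∫ z, f z = t ^ n * ∫ y, f (x + t • y) := by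
  have h := Measure.integral_comp_smul (volume : Measure (Fin n → ℝ)) (fun z => f (x + z)) t
  rw [integral_add_left_eq_self f x, Module.finrank_fin_fun, smul_eq_mul,
    abs_of_pos (by positivity)] at h
  rw [h, ← mul_assoc, mul_inv_cancel₀ (by positivity), one_mul]

lemma prefactor_rescale (n : ℕ) {t : ℝ} (ht : 0 < t) :
    (4 * Real.pi * t ^ 2) ^ (-(n : ℝ) / 2) * t ^ n = (4 * Real.pi) ^ (-(n : ℝ) / 2) := by
  rw [Real.mul_rpow (by positivity) (by positivity), ← Real.rpow_natCast t 2,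
    ← Real.rpow_mul ht.le, mul_assoc, ← Real.rpow_natCast t n, ← Real.rpow_add ht]
  have : ((2 : ℕ) : ℝ) * (-(n : ℝ) / 2) + n = 0 := by push_cast; ring
  rw [this, Real.rpow_zero, mul_one]

lemma gw_neg (G : Matrix (Fin n) (Fin n) ℝ) (y : Fin n → ℝ) : gw G (-y) = gw G y := by
  simp [gw]

lemma gE_odd (G : Matrix (Fin n) (Fin n) ℝ) {f : (Fin n → ℝ) → ℝ} (hf : ∀ y, f (-y) = -f y) :
    gE G f = 0 := by
  have h := integral_neg_eq_self (fun y => f y * gw G y) (volume : Measure (Fin n → ℝ))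
  simp only [hf, gw_neg, neg_mul, integral_neg] at h
  rw [gE]
  linarith

lemma coef1_odd (hS : ContDiff ℝ (⊤ : ℕ∞) S) (hφ : ContDiff ℝ (⊤ : ℕ∞) φ) (y : Fin n → ℝ) :
    coef1 S φ x (-y) = -coef1 S φ x y := by
  simp only [coef1, tay_neg hS, tay_neg hφ]
  ring

lemma coef3_odd (hS : ContDiff ℝ (⊤ : ℕ∞) S) (hφ : ContDiff ℝ (⊤ : ℕ∞) φ) (y : Fin n → ℝ) :
    coef3 S φ x (-y) = -coef3 S φ x y := by
  simp only [coef3, tay_neg hS, tay_neg hφ]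
  ring

/-- The subleading coefficient: Gaussian expectation of the `t²` coefficient. -/
lemma gE_coef2 (hS : ContDiff ℝ (⊤ : ℕ∞) S) (hSc : HasCompactSupport S)
    (hφ : ContDiff ℝ (⊤ : ℕ∞) φ) (hφc : HasCompactSupport φ)
    {G : Matrix (Fin n) (Fin n) ℝ} (hG : G.PosDef) :
    gE G (coef2 S φ x) =
      ((∑ i, ∑ j, G⁻¹ i j * pd n i (pd n j φ) x) -
        (∑ i, ∑ j, ∑ p, ∑ q, G⁻¹ i j * G⁻¹ p q * pd3 n S x i p q * pd n j φ x) +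
        (-(1 / 4) * (∑ i, ∑ j, ∑ k, ∑ l, G⁻¹ i j * G⁻¹ k l * pd4 n S x i j k l) +
          (1 / 12) * (∑ i, ∑ j, ∑ l, ∑ m, ∑ k, ∑ r,
            (2 * G⁻¹ i l * G⁻¹ j m + 3 * G⁻¹ i j * G⁻¹ l m) *
              G⁻¹ k r * pd3 n S x i j k * pd3 n S x l m r)) * φ x) * ∫ y, gw G y := by
  have a2 := tay_polyGrowth hφ hφc x 2
  have a1 := tay_polyGrowth hφ hφc x 1
  have s3 := tay_polyGrowth hS hSc x 3
  have s4 := tay_polyGrowth hS hSc x 4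
  have hT : ∀ i j k, pd3 n S x i j k = pd3 n S x j i k := fun i j k => (pd3_symm hS x i j k).1
  have hT' : ∀ i j k, pd3 n S x i j k = pd3 n S x i k j := fun i j k => (pd3_symm hS x i j k).2
  have e2 : gE G (tay φ x 2) = (∑ i, ∑ j, G⁻¹ i j * pd n i (pd n j φ) x) * ∫ y, gw G y := by
    rw [← gE_two_sum hG]
    exact congrArg _ (funext fun y => tay_two hφ x y)
  have e31 : gE G (fun y => tay S x 3 y * tay φ x 1 y) =
      (2 * ∑ i, ∑ j, ∑ k, ∑ l, G⁻¹ i j * G⁻¹ k l * pd3 n S x i k l * pd n j φ x) *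
        ∫ y, gw G y := by
    rw [← gE_cubic_linear hG hT hT' (fun j => pd n j φ x)]
    exact congrArg _ (funext fun y => by rw [tay_three hS, tay_one])
  have e33 : gE G (fun y => tay S x 3 y * tay S x 3 y) =
      (2 / 3 * ∑ i, ∑ j, ∑ l, ∑ m, ∑ k, ∑ r,
        (2 * G⁻¹ i l * G⁻¹ j m + 3 * G⁻¹ i j * G⁻¹ l m) *
          G⁻¹ k r * pd3 n S x i j k * pd3 n S x l m r) * ∫ y, gw G y := by
    rw [← gE_cubic_sq hG hT hT']
    exact congrArg _ (funext fun y => by rw [tay_three hS])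
  have e4 : gE G (tay S x 4) =
      (1 / 2 * ∑ i, ∑ j, ∑ k, ∑ l, G⁻¹ i j * G⁻¹ k l * pd4 n S x i j k l) * ∫ y, gw G y := by
    rw [← gE_quartic hG (R := pd4 n S x)
      (fun i j k l => congrFun (congrArg (pd n i) (pd_comm (contDiff_pd hS l) j k)) x)
      (fun i j k l => congrFun (congrArg (pd n i) (congrArg (pd n j) (pd_comm hS k l))) x)]
    exact congrArg _ (funext fun y => tay_four hS x y)
  have hsplit : coef2 S φ x = fun y => (tay φ x 2 y + -(1 / 2) * (tay S x 3 y * tay φ x 1 y)) +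
      ((φ x / 8) * (tay S x 3 y * tay S x 3 y) + (-(φ x / 2)) * tay S x 4 y) := by
    funext y
    simp only [coef2]
    ring
  have c {f : (Fin n → ℝ) → ℝ} (r : ℝ) (hf : PolyGrowth f) : PolyGrowth (fun y => r * f y) :=
    (PolyGrowth.const r).mul hf
  rw [hsplit, gE_add hG (a2.add (c _ (s3.mul a1))) ((c _ (s3.mul s3)).add (c _ s4)),
    gE_add hG a2 (c _ (s3.mul a1)), gE_add hG (c _ (s3.mul s3)) (c _ s4), gE_const_mul,
    gE_const_mul, gE_const_mul, e2, e31, e33]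
  change _ + (_ + _ * gE G (tay S x 4)) = _
  rw [e4]
  ring

/-- Uniform Gaussian domination of the error in the rescaled integrand. Away from the support of
`φ` the integrand vanishes, but there `t ‖y‖ ≥ r`, so the expansion itself is `O(t⁴ ‖y‖⁴)`. -/
lemma kernel_bound (hS : ContDiff ℝ (⊤ : ℕ∞) S) (hSc : HasCompactSupport S)
    (hS0 : S x = 0) (hgrad : fderiv ℝ S x = 0) (hφ : ContDiff ℝ (⊤ : ℕ∞) φ)
    (hφc : HasCompactSupport φ) (hG : (hess n S x).PosDef) {r c : ℝ} (hr : 0 < r) (hc : 0 < c)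
    (hcoer : ∀ z, (φ z ≠ 0 ∨ ‖z - x‖ < r) → c * ‖z - x‖ ^ 2 ≤ S z) :
    ∃ (C d : ℝ) (N : ℕ), 0 ≤ C ∧ 0 < d ∧ ∀ t y, 0 < t → t ≤ 1 →
      |Real.exp (-S (x + t • y) / (2 * t ^ 2)) * φ (x + t • y) -
        (φ x + t * coef1 S φ x y + t ^ 2 * coef2 S φ x y + t ^ 3 * coef3 S φ x y) *
          gw (hess n S x) y| ≤
      t ^ 4 * (C * ((1 + ‖y‖) ^ N * Real.exp (-(d * ‖y‖ ^ 2)))) := by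
  obtain ⟨C, N, hC, hker⟩ := kernel_expansion hS hSc hS0 hgrad hφ hφc
  have hE := expands_product hS hSc hS0 hgrad hφ hφc
  obtain ⟨D, M, hD, hpoly⟩ := polyBigO_poly hE.h0 hE.h1 hE.h2 hE.h3
  obtain ⟨e, he, hquad⟩ := quad_coercive hG
  have hgw : ∀ y, gw (hess n S x) y ≤ Real.exp (-(min e (c / 2) * ‖y‖ ^ 2)) := fun y => by
    refine Real.exp_le_exp.2 (neg_le_neg (le_trans ?_ (hquad y)))
    gcongr
    exact min_le_left _ _
  refine ⟨2 * C + D / r ^ 4, min e (c / 2), N + (M + 4), by positivity, by positivity,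
    fun t y ht ht1 => ?_⟩
  have hone : (1 : ℝ) ≤ 1 + ‖y‖ := by linarith [norm_nonneg y]
  have hN : (1 + ‖y‖) ^ N ≤ (1 + ‖y‖) ^ (N + (M + 4)) := pow_le_pow_right₀ hone (by omega)
  have hM : (1 + ‖y‖) ^ (M + 4) ≤ (1 + ‖y‖) ^ (N + (M + 4)) := pow_le_pow_right₀ hone (by omega)
  have hnorm : ‖x + t • y - x‖ = t * ‖y‖ := by
    rw [add_sub_cancel_left, norm_smul, Real.norm_eq_abs, abs_of_pos ht]
  have hg := hgw y
  have hg0 : 0 < gw (hess n S x) y := Real.exp_pos _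
  set E := Real.exp (-(min e (c / 2) * ‖y‖ ^ 2)) with hEdef
  have hE0 : 0 < E := Real.exp_pos _
  by_cases hz : φ (x + t • y) ≠ 0 ∨ ‖x + t • y - x‖ < r
  · have h1 := hcoer _ hz
    rw [hnorm] at h1
    have h2 : Real.exp (-S (x + t • y) / (2 * t ^ 2)) ≤ E := by
      refine Real.exp_le_exp.2 ?_
      rw [div_le_iff₀ (by positivity)]
      have : min e (c / 2) * ‖y‖ ^ 2 * (2 * t ^ 2) ≤ c / 2 * ‖y‖ ^ 2 * (2 * t ^ 2) := by
        gcongr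
        exact min_le_right _ _
      nlinarith
    calc _ ≤ C * t ^ 4 * (1 + ‖y‖) ^ N * (gw (hess n S x) y +
            Real.exp (-S (x + t • y) / (2 * t ^ 2))) := hker t y ht ht1
      _ ≤ C * t ^ 4 * (1 + ‖y‖) ^ (N + (M + 4)) * (E + E) := by gcongr
      _ = t ^ 4 * (2 * C * ((1 + ‖y‖) ^ (N + (M + 4)) * E)) := by ring
      _ ≤ _ := by
        gcongr
        exact le_add_of_nonneg_right (by positivity)
  · push Not at hz
    rw [hnorm] at hz
    have h1 : (1 : ℝ) ≤ t * (1 + ‖y‖) / r := by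
      rw [le_div_iff₀ hr]; nlinarith [hz.2]
    have h2 := hpoly t y ht ht1
    rw [pow_zero, mul_one] at h2
    rw [hz.1, mul_zero, zero_sub, abs_neg, abs_mul, abs_of_pos hg0]
    calc _ ≤ D * (1 + ‖y‖) ^ M * E := by gcongr
      _ = D * (1 + ‖y‖) ^ M * E * 1 ^ 4 := by ring
      _ ≤ D * (1 + ‖y‖) ^ M * E * (t * (1 + ‖y‖) / r) ^ 4 := by gcongr
      _ = t ^ 4 * (D / r ^ 4 * ((1 + ‖y‖) ^ (M + 4) * E)) := by ring
      _ ≤ t ^ 4 * (D / r ^ 4 * ((1 + ‖y‖) ^ (N + (M + 4)) * E)) := by gcongr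
      _ ≤ _ := by
        gcongr
        exact le_add_of_nonneg_left (by positivity)

lemma integral_expansion (hS : ContDiff ℝ (⊤ : ℕ∞) S) (hSc : HasCompactSupport S)
    (hS0 : S x = 0) (hgrad : fderiv ℝ S x = 0) (hφ : ContDiff ℝ (⊤ : ℕ∞) φ)
    (hφc : HasCompactSupport φ) (hG : (hess n S x).PosDef) {r c : ℝ} (hr : 0 < r) (hc : 0 < c)
    (hcoer : ∀ z, (φ z ≠ 0 ∨ ‖z - x‖ < r) → c * ‖z - x‖ ^ 2 ≤ S z) :
    ∃ C : ℝ, ∀ t, 0 < t → t ≤ 1 →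
      |(∫ y, Real.exp (-S (x + t • y) / (2 * t ^ 2)) * φ (x + t • y)) -
        (φ x * (∫ y, gw (hess n S x) y) + t ^ 2 * gE (hess n S x) (coef2 S φ x))| ≤ C * t ^ 4 := by
  obtain ⟨C, d, N, hC, hd, hb⟩ := kernel_bound hS hSc hS0 hgrad hφ hφc hG hr hc hcoer
  have hE := expands_product hS hSc hS0 hgrad hφ hφc
  refine ⟨∫ y : Fin n → ℝ, C * ((1 + ‖y‖) ^ N * Real.exp (-(d * ‖y‖ ^ 2))),
    fun t ht ht1 => ?_⟩
  set G := hess n S x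
  have hK : Integrable fun y => Real.exp (-S (x + t • y) / (2 * t ^ 2)) * φ (x + t • y) := by
    refine Continuous.integrable_of_hasCompactSupport ?_ ?_
    · have := hS.continuous
      have := hφ.continuous
      fun_prop
    · refine HasCompactSupport.mul_left ?_
      exact hφc.comp_homeomorph ((Homeomorph.smulOfNeZero t ht.ne').trans (Homeomorph.addLeft x))
  have i0 : Integrable fun y => φ x * gw G y := gw_integrable hG (PolyGrowth.const (φ x))
  have i1 : Integrable fun y => t * (coef1 S φ x y * gw G y) :=
    (gw_integrable hG hE.h1).const_mul _
  have i2 : Integrable fun y => t ^ 2 * (coef2 S φ x y * gw G y) :=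
    (gw_integrable hG hE.h2).const_mul _
  have i3 : Integrable fun y => t ^ 3 * (coef3 S φ x y * gw G y) :=
    (gw_integrable hG hE.h3).const_mul _
  have hmain : ∫ y, (φ x + t * coef1 S φ x y + t ^ 2 * coef2 S φ x y + t ^ 3 * coef3 S φ x y) *
      gw G y = φ x * (∫ y, gw G y) + t ^ 2 * gE G (coef2 S φ x) := by
    have o1 : ∫ y, coef1 S φ x y * gw G y = 0 := gE_odd G (coef1_odd hS hφ)
    have o3 : ∫ y, coef3 S φ x y * gw G y = 0 := gE_odd G (coef3_odd hS hφ)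
    have : ∀ y, (φ x + t * coef1 S φ x y + t ^ 2 * coef2 S φ x y + t ^ 3 * coef3 S φ x y) *
      gw G y = φ x * gw G y + t * (coef1 S φ x y * gw G y) + t ^ 2 * (coef2 S φ x y * gw G y) +
        t ^ 3 * (coef3 S φ x y * gw G y) := fun y => by ring
    simp only [this]
    have i01 : Integrable fun y => φ x * gw G y + t * (coef1 S φ x y * gw G y) := i0.add i1
    have i012 : Integrable fun y => φ x * gw G y + t * (coef1 S φ x y * gw G y) +
      t ^ 2 * (coef2 S φ x y * gw G y) := i01.add i2
    rw [integral_add i012 i3, integral_add i01 i2, integral_add i0 i1]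
    simp only [integral_const_mul, o1, o3, gE]
    ring
  have hmi : Integrable fun y => (φ x + t * coef1 S φ x y + t ^ 2 * coef2 S φ x y +
      t ^ 3 * coef3 S φ x y) * gw G y := by
    refine (((i0.add i1).add i2).add i3).congr (Eventually.of_forall fun y => ?_)
    simp only [Pi.add_apply]
    ring
  rw [← hmain, ← integral_sub hK hmi]
  rw [← Real.norm_eq_abs]
  refine (norm_integral_le_of_norm_le (((integrable_pow_mul_exp hd N).const_mul C).const_mul (t ^ 4))
    (Eventually.of_forall fun y => hb t y ht ht1)).trans_eq ?_
  rw [integral_const_mul, mul_comm]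

end Core

/-! ### Localisation of the phase -/

section Localise

variable {n : ℕ}

/-- A function smooth on an open set agrees near a given compact subset with a globally smooth,
compactly supported one. -/
lemma exists_global_extension {U K : Set (Fin n → ℝ)} (hU : IsOpen U) (hK : IsCompact K)
    (hKU : K ⊆ U) {S : (Fin n → ℝ) → ℝ} (hS : ContDiffOn ℝ (⊤ : ℕ∞) S U) :
    ∃ T : (Fin n → ℝ) → ℝ, ContDiff ℝ (⊤ : ℕ∞) T ∧ HasCompactSupport T ∧
      ∀ z ∈ K, T =ᶠ[𝓝 z] S := by
  obtain ⟨L, hL, hKL, hLU⟩ := exists_compact_between hK hU hKU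
  obtain ⟨χ, h1, h0, -⟩ := exists_contMDiffMap_one_nhds_of_subset_interior
    (modelWithCornersSelf ℝ (Fin n → ℝ)) (n := ⊤) hK.isClosed hKL
  have hχ : ContDiff ℝ (⊤ : ℕ∞) χ := χ.contMDiff.contDiff
  refine ⟨fun z => χ z * S z, contDiff_iff_contDiffAt.2 fun z => ?_, ?_, fun z hz => ?_⟩
  · by_cases hz : z ∈ U
    · exact hχ.contDiffAt.mul (hS.contDiffAt (hU.mem_nhds hz))
    · refine (contDiffAt_const (c := (0 : ℝ))).congr_of_eventuallyEq ?_
      filter_upwards [hL.isClosed.isOpen_compl.mem_nhds fun h => hz (hLU h)] with w hw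
      rw [h0 w hw, zero_mul]
  · exact HasCompactSupport.intro hL fun w hw => by rw [h0 w hw, zero_mul]
  · filter_upwards [eventually_nhdsSet_iff_forall.1 h1 z hz] with w hw
    rw [hw, one_mul]

/-- The phase dominates a multiple of the squared distance to its minimum: by the second-order
Taylor formula near the minimum, and by compactness away from it. -/
lemma exists_coercive {T : (Fin n → ℝ) → ℝ} {x : Fin n → ℝ} (hT : ContDiff ℝ (⊤ : ℕ∞) T)
    (hTc : HasCompactSupport T) (hT0 : T x = 0) (hgrad : fderiv ℝ T x = 0)
    (hG : (hess n T x).PosDef) {K : Set (Fin n → ℝ)} (hK : IsCompact K)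
    (hpos : ∀ z ∈ K, z ≠ x → 0 < T z) :
    ∃ c : ℝ, 0 < c ∧ ∀ z ∈ K, c * ‖z - x‖ ^ 2 ≤ T z := by
  obtain ⟨e, he, hquad⟩ := quad_coercive hG
  obtain ⟨C, hC, hrem⟩ := tay_remainder hT hTc x 2
  set δ := e / (C + 1)
  have hδ : 0 < δ := by positivity
  have hnear : ∀ z, ‖z - x‖ < δ → e * ‖z - x‖ ^ 2 ≤ T z := fun z hz => by
    have h := hrem (z - x)
    have hq := hquad (z - x)
    simp only [Finset.sum_range_succ, Finset.sum_range_zero, zero_add, tay_zero, hT0,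
      tay_one_eq_zero hgrad, tay_two hT, add_sub_cancel, Nat.reduceAdd] at h
    simp only [hess, Matrix.of_apply] at hq
    rw [lt_div_iff₀ (by positivity)] at hz
    have h0 := norm_nonneg (z - x)
    have h1 : C * ‖z - x‖ ^ 3 ≤ e * ‖z - x‖ ^ 2 := by
      nlinarith [mul_nonneg (sq_nonneg ‖z - x‖) (by nlinarith : 0 ≤ e - C * ‖z - x‖)]
    nlinarith [(abs_le.1 h).1]
  have hne : ∀ z ∈ K \ Metric.ball x δ, z ≠ x := fun z hz h => by
    rw [h] at hz
    exact hz.2 (Metric.mem_ball_self hδ)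
  have hcont : ContinuousOn (fun z => T z / ‖z - x‖ ^ 2) (K \ Metric.ball x δ) := by
    have := hT.continuous
    refine ContinuousOn.div (by fun_prop) (by fun_prop) fun z hz => ?_
    exact pow_ne_zero 2 (norm_ne_zero_iff.2 (sub_ne_zero.2 (hne z hz)))
  have hposn : ∀ z ∈ K \ Metric.ball x δ, 0 < ‖z - x‖ ^ 2 := fun z hz =>
    pow_pos (norm_pos_iff.2 (sub_ne_zero.2 (hne z hz))) 2
  obtain ⟨m, hm, hfar⟩ := (hK.diff Metric.isOpen_ball).exists_forall_le' hcont (a := 0)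
    fun z hz => div_pos (hpos z hz.1 (hne z hz)) (hposn z hz)
  refine ⟨min e m, lt_min he hm, fun z hz => ?_⟩
  by_cases hzb : z ∈ Metric.ball x δ
  · refine le_trans ?_ (hnear z (by rwa [← dist_eq_norm]))
    gcongr
    exact min_le_left _ _
  · have h := hfar z ⟨hz, hzb⟩
    rw [le_div_iff₀ (hposn z ⟨hz, hzb⟩)] at h
    refine le_trans ?_ h
    gcongr
    exact min_le_right _ _

end Localise

/-- The first two terms of the asymptotic expansion of the Laplace-type integral:
`F(ε) = (det G)^{-1/2} φ(x') + ε F₁ + O(ε²)` as `ε → 0⁺`, with the explicit subleading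
coefficient `F₁` built from `G⁻¹`, the third and fourth derivatives of the phase at `x'`,
and the derivatives of `φ` at `x'`. -/
theorem laplace_integral_two_terms (n : ℕ) (hn : 1 ≤ n)
    (U : Set (Fin n → ℝ)) (hU : IsOpen U) (x' : Fin n → ℝ) (hx' : x' ∈ U)
    (S : (Fin n → ℝ) → ℝ) (hS : ContDiffOn ℝ (⊤ : ℕ∞) S U)
    (hS0 : S x' = 0) (hgrad : fderiv ℝ S x' = 0)
    (hSpos : ∀ x ∈ U, x ≠ x' → 0 < S x)
    (hSnonneg : ∀ x ∈ U, 0 ≤ S x)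
    (hhess : (hess n S x').PosDef)
    (φ : (Fin n → ℝ) → ℝ) (hφ : ContDiff ℝ (⊤ : ℕ∞) φ)
    (hφc : HasCompactSupport φ) (hφsupp : tsupport φ ⊆ U) :
    (fun ε : ℝ =>
        (4 * Real.pi * ε) ^ (-(n : ℝ) / 2) *
            (∫ x in U, Real.exp (-S x / (2 * ε)) * φ x) -
          ((Real.sqrt (hess n S x').det)⁻¹ * φ x' +
            ε * ((Real.sqrt (hess n S x').det)⁻¹ *
              ((∑ i, ∑ j, (hess n S x')⁻¹ i j * pd n i (pd n j φ) x') -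
               (∑ i, ∑ j, ∑ p, ∑ q,
                  (hess n S x')⁻¹ i j * (hess n S x')⁻¹ p q *
                    pd3 n S x' i p q * pd n j φ x') +
               (-(1 / 4) * (∑ i, ∑ j, ∑ k, ∑ l,
                    (hess n S x')⁻¹ i j * (hess n S x')⁻¹ k l * pd4 n S x' i j k l) +
                (1 / 12) * (∑ i, ∑ j, ∑ l, ∑ m, ∑ k, ∑ r,
                    (2 * (hess n S x')⁻¹ i l * (hess n S x')⁻¹ j m +
                      3 * (hess n S x')⁻¹ i j * (hess n S x')⁻¹ l m) *
                      (hess n S x')⁻¹ k r * pd3 n S x' i j k * pd3 n S x' l m r)) *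
                  φ x'))))
      =O[𝓝[>] (0 : ℝ)] fun ε => ε ^ 2 := by
  obtain ⟨r, hr, hrU⟩ := Metric.nhds_basis_closedBall.mem_iff.1 (hU.mem_nhds hx')
  set K := tsupport φ ∪ Metric.closedBall x' r with hKdef
  have hK : IsCompact K := IsCompact.union hφc (isCompact_closedBall x' r)
  have hKU : K ⊆ U := Set.union_subset hφsupp hrU
  obtain ⟨T, hT, hTc, hTS⟩ := exists_global_extension hU hK hKU hS
  have hxK : x' ∈ K := Or.inr (Metric.mem_closedBall_self hr.le)
  have hev : T =ᶠ[𝓝 x'] S := hTS _ hxK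
  -- Derivatives at the minimum only see the germ of the phase.
  have hhessE : hess n S x' = hess n T x' := by
    ext i j
    exact ((pd_congr (pd_congr hev j) i).eq_of_nhds).symm
  have h3E : pd3 n S x' = pd3 n T x' := by
    funext i j k
    exact ((pd_congr (pd_congr (pd_congr hev k) j) i).eq_of_nhds).symm
  have h4E : pd4 n S x' = pd4 n T x' := by
    funext i j k l
    exact ((pd_congr (pd_congr (pd_congr (pd_congr hev l) k) j) i).eq_of_nhds).symm
  have hTeq : ∀ z ∈ K, T z = S z := fun z hz => (hTS z hz).eq_of_nhds
  have hT0 : T x' = 0 := (hTeq x' hxK).trans hS0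
  have hTgrad : fderiv ℝ T x' = 0 := hev.fderiv_eq.trans hgrad
  have hInt : ∀ ε : ℝ, ∫ x in U, Real.exp (-S x / (2 * ε)) * φ x =
      ∫ x, Real.exp (-T x / (2 * ε)) * φ x := fun ε => by
    have h0 : ∀ z, z ∉ tsupport φ → φ z = 0 := fun z hz => image_eq_zero_of_notMem_tsupport hz
    rw [setIntegral_eq_integral_of_forall_compl_eq_zero fun z hz => by
      rw [h0 z fun h => hz (hφsupp h), mul_zero]]
    refine integral_congr_ae (Eventually.of_forall fun z => ?_)
    by_cases hz : z ∈ tsupport φ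
    · simp only [hTeq z (Or.inl hz)]
    · simp only [h0 z hz, mul_zero]
  rw [hhessE] at hhess
  simp only [hhessE, h3E, h4E, hInt]
  obtain ⟨c, hc, hcoer⟩ := exists_coercive hT hTc hT0 hTgrad hhess hK
    fun z hz hzx => by rw [hTeq z hz]; exact hSpos z (hKU hz) hzx
  obtain ⟨C, hC⟩ := integral_expansion hT hTc hT0 hTgrad hφ hφc hhess hr hc fun z hz => by
    refine hcoer z (hz.elim (fun h => Or.inl (subset_tsupport φ h)) fun h => Or.inr ?_)
    rw [Metric.mem_closedBall, dist_eq_norm]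
    exact h.le
  rw [gE_coef2 hT hTc hφ hφc hhess, integral_gw hhess] at hC
  have hpi : (4 * Real.pi) ^ (-(n : ℝ) / 2) * (4 * Real.pi) ^ ((n : ℝ) / 2) = 1 := by
    rw [← Real.rpow_add (by positivity), neg_div, neg_add_cancel, Real.rpow_zero]
  have hp0 : 0 < (4 * Real.pi) ^ (-(n : ℝ) / 2) := by positivity
  refine IsBigO.of_bound ((4 * Real.pi) ^ (-(n : ℝ) / 2) * C) ?_
  filter_upwards [Ioc_mem_nhdsGT (zero_lt_one' ℝ)] with ε hε
  obtain ⟨t, ht, rfl⟩ : ∃ t : ℝ, 0 < t ∧ ε = t ^ 2 :=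
    ⟨Real.sqrt ε, Real.sqrt_pos.2 hε.1, (Real.sq_sqrt hε.1.le).symm⟩
  have ht1 : t ≤ 1 := by nlinarith [hε.2]
  specialize hC t ht ht1
  rw [integral_rescale (fun x => Real.exp (-T x / (2 * t ^ 2)) * φ x) x' ht, ← mul_assoc,
    prefactor_rescale n ht, Real.norm_eq_abs, Real.norm_eq_abs,
    abs_of_nonneg (by positivity : 0 ≤ (t ^ 2) ^ 2), ← pow_mul, mul_assoc]
  refine le_trans (le_of_eq ?_) (mul_le_mul_of_nonneg_left hC hp0.le)
  rw [← abs_of_pos hp0, ← abs_mul, abs_of_pos hp0]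
  congr 1
  generalize (4 * Real.pi) ^ (-(n : ℝ) / 2) = a at hpi
  generalize (4 * Real.pi) ^ ((n : ℝ) / 2) = b at hpi
  have key : ∀ J s f F τ : ℝ, a * J - (s * f + τ * (s * F)) =
      a * (J - (f * (b * s) + τ * (F * (b * s)))) := fun J s f F τ => by
    linear_combination (s * f + τ * (s * F)) * hpi
  exact key _ _ _ _ _
end

section
/- Let U ⊆ ℝⁿ be open, let g^{ij} : U → ℝ be smooth functions such that (g^{ij}(x)) is a symmetric matrix for each x, and let σ : U × U → ℝ be a smooth function satisfying the Hamilton–Jacobi equation σ(x,x') = (1/2) Σ_{i,j} g^{ij}(x) σ_{,i}(x,x') σ_{,j}(x,x') for all (x,x') ∈ U × U. Let (x,x') ∈ U × U be a point at which the matrix of mixed second derivatives (σ_{,ij'}(x,x')) is invertible, with inverse matrix (γ^{j'i}). Then σ satisfies the metric-free equation σ(x,x') = (1/2) Σ_{i,j} γ^{i'j} σ_{,i'}(x,x') σ_{,j}(x,x'). -/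
/-!
Differentiating `σ = ½ g^{ij} σ_{,i} σ_{,j}` in `x'^k`, where `g` does not depend on `x'` and is
symmetric, gives `σ_{,k'} = ∑ g^{ij} σ_{,ik'} σ_{,j}`. Contracting with the inverse `γ^{k'm}` of
`σ_{,ik'}` yields `∑ γ^{k'm} σ_{,k'} = ∑ g^{mj} σ_{,j}`, and a further contraction with `σ_{,m}`
returns `g^{mj} σ_{,m} σ_{,j} = 2σ`. The analytic input is that `∂/∂x'^k` of `σ_{,i}` exists and
equals `mixedHess`, in which the derivatives are taken in the other order; this is the symmetry
of the second Fréchet derivative on the product space.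
-/

open scoped BigOperators
open Set

/-- `∂/∂x'^i` in the second argument of a two-point function. -/
noncomputable def d2 (n : ℕ) (i : Fin n) (f : (Fin n → ℝ) → (Fin n → ℝ) → ℝ) :
    (Fin n → ℝ) → (Fin n → ℝ) → ℝ :=
  fun x x' => fderiv ℝ (fun y => f x y) x' (Pi.single i 1)

/-- The matrix of mixed second derivatives `σ_{,ij'} = ∂²σ/∂x^i∂x'^j` at `(x,x')`. -/
noncomputable def mixedHess (n : ℕ) (σ : (Fin n → ℝ) → (Fin n → ℝ) → ℝ)
    (x x' : Fin n → ℝ) : Matrix (Fin n) (Fin n) ℝ :=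
  Matrix.of fun i j => d1 n i (d2 n j σ) x x'

lemma d1_eq_fderiv_s10 {n : ℕ} {σ : (Fin n → ℝ) → (Fin n → ℝ) → ℝ} {x x' : Fin n → ℝ}
    (h : DifferentiableAt ℝ (fun p : (Fin n → ℝ) × (Fin n → ℝ) => σ p.1 p.2) (x, x'))
    (i : Fin n) :
    d1 n i σ x x' = fderiv ℝ (fun p : (Fin n → ℝ) × (Fin n → ℝ) => σ p.1 p.2) (x, x')
      (Pi.single i 1, 0) := by
  have h1 : HasFDerivAt (fun y => σ y x') _ x :=
    HasFDerivAt.comp x (f := fun y => (y, x')) h.hasFDerivAt (hasFDerivAt_prodMk_left x x')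
  rw [d1, h1.fderiv]
  simp

lemma d2_eq_fderiv {n : ℕ} {σ : (Fin n → ℝ) → (Fin n → ℝ) → ℝ} {x x' : Fin n → ℝ}
    (h : DifferentiableAt ℝ (fun p : (Fin n → ℝ) × (Fin n → ℝ) => σ p.1 p.2) (x, x'))
    (i : Fin n) :
    d2 n i σ x x' = fderiv ℝ (fun p : (Fin n → ℝ) × (Fin n → ℝ) => σ p.1 p.2) (x, x')
      (0, Pi.single i 1) := by
  have h1 : HasFDerivAt (fun y => σ x y) _ x' :=
    HasFDerivAt.comp x' (f := fun y => (x, y)) h.hasFDerivAt (hasFDerivAt_prodMk_right x x')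
  rw [d2, h1.fderiv]
  simp

/-- The mixed derivatives commute: the first derivative `σ_{,i}` is differentiable in `x'`, and
its partial derivatives there are the entries of `mixedHess`, which is defined with the opposite
order of differentiation. -/
lemma differentiableAt_d1_and_d2_d1 {n : ℕ} {U : Set (Fin n → ℝ)} (hU : IsOpen U)
    {σ : (Fin n → ℝ) → (Fin n → ℝ) → ℝ}
    (hσ : ContDiffOn ℝ (⊤ : ℕ∞) (fun p : (Fin n → ℝ) × (Fin n → ℝ) => σ p.1 p.2) (U ×ˢ U))
    {x x' : Fin n → ℝ} (hx : x ∈ U) (hx' : x' ∈ U) (i : Fin n) :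
    DifferentiableAt ℝ (fun y => d1 n i σ x y) x' ∧
      ∀ k, fderiv ℝ (fun y => d1 n i σ x y) x' (Pi.single k 1) = mixedHess n σ x x' i k := by
  set F : (Fin n → ℝ) × (Fin n → ℝ) → ℝ := fun p => σ p.1 p.2 with hF
  have hc : ∀ y ∈ U, ∀ y' ∈ U, ContDiffAt ℝ (⊤ : ℕ∞) F (y, y') := fun y hy y' hy' =>
    hσ.contDiffAt ((hU.prod hU).mem_nhds ⟨hy, hy'⟩)
  have hd : ∀ y ∈ U, ∀ y' ∈ U, DifferentiableAt ℝ F (y, y') := fun y hy y' hy' =>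
    (hc y hy y' hy').differentiableAt (by simp)
  have hdd : HasFDerivAt (fderiv ℝ F) (fderiv ℝ (fderiv ℝ F) (x, x')) (x, x') :=
    (((hc x hx x' hx').fderiv_right (m := 1)
      (by norm_cast)).differentiableAt (by simp)).hasFDerivAt
  have hsymm : IsSymmSndFDerivAt ℝ F (x, x') :=
    (hc x hx x' hx').isSymmSndFDerivAt (by simp; norm_cast)
  have e1 : (fun y => d1 n i σ x y) =ᶠ[nhds x'] fun y => fderiv ℝ F (x, y) (Pi.single i 1, 0) := by
    filter_upwards [hU.mem_nhds hx'] with y hy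
    exact d1_eq_fderiv_s10 (hd x hx y hy) i
  have h1 : HasFDerivAt (fun y => fderiv ℝ F (x, y)) _ x' :=
    HasFDerivAt.comp x' (f := fun y => (x, y)) hdd (hasFDerivAt_prodMk_right x x')
  have h1' := (h1.clm_apply (hasFDerivAt_const ((Pi.single i 1, 0) :
    (Fin n → ℝ) × (Fin n → ℝ)) x')).congr_of_eventuallyEq e1
  refine ⟨h1'.differentiableAt, fun k => ?_⟩
  have e2 : (fun y => d2 n k σ y x') =ᶠ[nhds x] fun y => fderiv ℝ F (y, x') (0, Pi.single k 1) := by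
    filter_upwards [hU.mem_nhds hx] with y hy
    exact d2_eq_fderiv (hd y hy x' hx') k
  have h2 : HasFDerivAt (fun y => fderiv ℝ F (y, x')) _ x :=
    HasFDerivAt.comp x (f := fun y => (y, x')) hdd (hasFDerivAt_prodMk_left x x')
  have h2' := (h2.clm_apply (hasFDerivAt_const ((0, Pi.single k 1) :
    (Fin n → ℝ) × (Fin n → ℝ)) x)).congr_of_eventuallyEq e2
  rw [mixedHess, Matrix.of_apply, d1, h2'.fderiv, h1'.fderiv]
  simpa using hsymm.eq (0, Pi.single k 1) (Pi.single i 1, 0)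

/-- A solution of the Hamilton–Jacobi equation `σ = ½ g^{ij} σ_{,i} σ_{,j}` satisfies the
metric-free equation `σ = ½ γ^{i'j} σ_{,i'} σ_{,j}`, where `γ` is the inverse of the matrix
of mixed second derivatives `σ_{,ij'}`. -/
theorem ruseSynge_metric_free (n : ℕ) (hn : 1 ≤ n)
    (U : Set (Fin n → ℝ)) (hU : IsOpen U)
    (g : Fin n → Fin n → (Fin n → ℝ) → ℝ)
    (hgsmooth : ∀ i j, ContDiffOn ℝ (⊤ : ℕ∞) (g i j) U)
    (hgsymm : ∀ i j, ∀ x ∈ U, g i j x = g j i x)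
    (σ : (Fin n → ℝ) → (Fin n → ℝ) → ℝ)
    (hσ : ContDiffOn ℝ (⊤ : ℕ∞) (fun p : (Fin n → ℝ) × (Fin n → ℝ) => σ p.1 p.2) (U ×ˢ U))
    (hHJ : ∀ x ∈ U, ∀ x' ∈ U,
      σ x x' = (1 / 2) * ∑ i, ∑ j, g i j x * d1 n i σ x x' * d1 n j σ x x')
    (x x' : Fin n → ℝ) (hx : x ∈ U) (hx' : x' ∈ U)
    (hinv : IsUnit (mixedHess n σ x x').det) :
    σ x x' = (1 / 2) * ∑ i, ∑ j,
      (mixedHess n σ x x')⁻¹ i j * d2 n i σ x x' * d1 n j σ x x' := by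
  set M := mixedHess n σ x x' with hM
  set p : Fin n → ℝ := fun i => d1 n i σ x x' with hp
  set G : Matrix (Fin n) (Fin n) ℝ := Matrix.of fun i j => g i j x with hG
  -- the Hamilton–Jacobi equation differentiated in the second argument
  have key : ∀ k, d2 n k σ x x' = ∑ i, ∑ j, g i j x * M i k * p j := by
    intro k
    have hd := fun i => (differentiableAt_d1_and_d2_d1 hU hσ hx hx' i).1.hasFDerivAt
    have hk := fun i => (differentiableAt_d1_and_d2_d1 hU hσ hx hx' i).2 k
    have e : (fun y => σ x y) =ᶠ[nhds x'] fun y =>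
        (1 / 2) * ∑ i, ∑ j, g i j x * d1 n i σ x y * d1 n j σ x y := by
      filter_upwards [hU.mem_nhds hx'] with y hy
      exact hHJ x hx y hy
    have hs := ((HasFDerivAt.fun_sum (u := Finset.univ) fun i _ =>
      HasFDerivAt.fun_sum (u := Finset.univ) fun j _ =>
        ((hd i).const_mul (g i j x)).mul (hd j)).const_mul (1 / 2 : ℝ)).congr_of_eventuallyEq e
    have hs' : d2 n k σ x x' =
        (1 / 2) * ∑ i, ∑ j, (g i j x * p i * M j k + p j * (g i j x * M i k)) := by
      rw [d2, hs.fderiv]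
      simp [hk, hp, hM]
    have hswap : ∑ i, ∑ j, g i j x * p i * M j k = ∑ i, ∑ j, g i j x * M i k * p j := by
      rw [Finset.sum_comm]
      refine Finset.sum_congr rfl fun i _ => Finset.sum_congr rfl fun j _ => ?_
      rw [hgsymm j i x hx]
      ring
    have hsame : ∑ i, ∑ j, p j * (g i j x * M i k) = ∑ i, ∑ j, g i j x * M i k * p j :=
      Finset.sum_congr rfl fun i _ => Finset.sum_congr rfl fun j _ => by ring
    rw [hs']
    simp only [Finset.sum_add_distrib]
    rw [hswap, hsame]
    ring
  -- in matrix form: `d₂σ = (G p) M`, so `(d₂σ) M⁻¹ = G p`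
  have key' : (fun k => d2 n k σ x x') = Matrix.vecMul (G.mulVec p) M := by
    funext k
    rw [key]
    simp only [Matrix.vecMul, Matrix.mulVec, dotProduct, hG, Matrix.of_apply, Finset.sum_mul]
    exact Finset.sum_congr rfl fun i _ => Finset.sum_congr rfl fun j _ => by ring
  have hcontr : Matrix.vecMul (fun k => d2 n k σ x x') M⁻¹ = G.mulVec p := by
    rw [key', Matrix.vecMul_vecMul, Matrix.mul_nonsing_inv _ hinv, Matrix.vecMul_one]
  rw [hHJ x hx x' hx', Finset.sum_comm (f := fun i j => M⁻¹ i j * d2 n i σ x x' * d1 n j σ x x')]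
  congr 1
  refine Finset.sum_congr rfl fun m _ => ?_
  have hm := congrArg (· * p m) (congrFun hcontr m)
  simp only [Matrix.vecMul, Matrix.mulVec, dotProduct, hG, Matrix.of_apply,
    Finset.sum_mul] at hm
  calc _ = ∑ j, g m j x * p j * p m := Finset.sum_congr rfl fun j _ => by simp only [hp]; ring
    _ = _ := hm.symm
    _ = _ := Finset.sum_congr rfl fun j _ => by simp only [hp]; ring
end
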